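/- For every positive integer k, the function φ_k belongs to L²(0,∞) and ∫_0^∞ φ_k(x)² dx = ∫_1^∞ Δ_k(r)² r^{-3} dr, both integrals being finite. -/

import Mathlib

open scoped Real Topology
open Complex Filter MeasureTheory Finset Asymptotics

/-- The analytic extension of `s ↦ ((s-1) * ζ(s))^k` to `s = 1` (where its value is `1`). -/
noncomputable def zetaPowAux (k : ℕ) : ℂ → ℂ :=
  Function.update (fun s : ℂ => ((s - 1) * riemannZeta s) ^ k) 1 1

/-- `lam k j` is the Taylor coefficient `λ_{j,k}`, i.e. the `j`-th derivative at `s = 1` of the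
analytic extension of `(s-1)^k ζ(s)^k`; these numbers are real, and we record their real part. -/
noncomputable def lam (k j : ℕ) : ℝ :=
  (iteratedDeriv j (zetaPowAux k) 1).re

/-- The Fourier coefficients `ℓ_{n,k}` for `n ≥ -k` (an integer index). -/
noncomputable def ell (k : ℕ) (n : ℤ) : ℝ :=
  if 1 ≤ n then
    (-1 : ℝ) ^ n.toNat *
      ∑ j ∈ Finset.Icc 1 n.toNat,
        ((n.toNat - 1).choose (j - 1) : ℝ) * lam k (j + k) / (Nat.factorial (j + k))
  else
    (-1 : ℝ) ^ k *
      ∑ j ∈ Finset.range ((k + n).toNat + 1),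
        ((k - j).choose (-n).toNat : ℝ) * (-1 : ℝ) ^ j * lam k j / (Nat.factorial j)

/-- The Lindelöf Hypothesis: `ζ(1/2 + it) = O(|t|^ε)` for every `ε > 0`. -/
def LindelofHypothesis : Prop :=
  ∀ ε : ℝ, 0 < ε → ∃ C : ℝ, ∀ t : ℝ, 1 ≤ |t| →
    ‖riemannZeta (1 / 2 + t * Complex.I)‖ ≤ C * |t| ^ ε

/-- `dk k n` is the Piltz divisor function `d_k(n)`: the number of representations of `n` as an
ordered product of `k` positive integers (the `k`-th Dirichlet-convolution power of `ζ`). -/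
noncomputable def dk (k n : ℕ) : ℕ := (ArithmeticFunction.zeta ^ k) n

/-- The coefficients `a_{j,k}` of the polynomial `P_k`. -/
noncomputable def aCoef (k j : ℕ) : ℝ :=
  (-1 : ℝ) ^ (k - 1 - j) *
    ∑ i ∈ Finset.range (k - 1 - j + 1), (-1 : ℝ) ^ i * lam k i / (Nat.factorial i)

/-- The error term `Δ_k(x) = (Σ_{1 ≤ n ≤ x} d_k(n)) - x P_k(log x)` in the Piltz divisor
problem. -/
noncomputable def Deltak (k : ℕ) (x : ℝ) : ℝ :=
  (∑ n ∈ Finset.Icc 1 ⌊x⌋₊, (dk k n : ℝ)) -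
    x * ∑ j ∈ Finset.range k, aCoef k j / (Nat.factorial j) * (Real.log x) ^ j

/-- The `n`-th Laguerre polynomial. -/
noncomputable def laguerre (n : ℕ) (u : ℝ) : ℝ :=
  ∑ j ∈ Finset.range (n + 1), (n.choose j : ℝ) * (-1 : ℝ) ^ j * u ^ j / (Nat.factorial j)

/-- The Bessel function of the first kind of order `0`. -/
noncomputable def besselJ0 (u : ℝ) : ℝ :=
  ∑' m : ℕ, (-1 : ℝ) ^ m * (u / 2) ^ (2 * m) / ((Nat.factorial m : ℝ) ^ 2)

/-- `φ_k(x) = ∫_1^∞ Δ_k(r) J₀(2 √(x log r)) r⁻² dr`. -/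
noncomputable def phik (k : ℕ) (x : ℝ) : ℝ :=
  ∫ r in Set.Ioi (1 : ℝ), Deltak k r * besselJ0 (2 * Real.sqrt (x * Real.log r)) / r ^ 2

/-- The entire function `t ↦ ∑ (-t)^m / (m!)²`, equal to `J₀(2√t)` for `t ≥ 0`. -/
noncomputable def besselSeries (t : ℝ) : ℝ :=
  ∑' m : ℕ, (-1 : ℝ) ^ m * t ^ m / ((Nat.factorial m : ℝ) ^ 2)

lemma besselJ0_two_mul_sqrt {t : ℝ} (ht : 0 ≤ t) :
    besselJ0 (2 * Real.sqrt t) = besselSeries t := by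
  unfold besselJ0 besselSeries
  congr 1; ext m
  rw [mul_div_cancel_left₀ _ (two_ne_zero), pow_mul, Real.sq_sqrt ht]

lemma summable_norm_besselSeries (t : ℝ) :
    Summable (fun m : ℕ => ‖(-1 : ℝ) ^ m * t ^ m / ((Nat.factorial m : ℝ) ^ 2)‖) := by
  refine Summable.of_nonneg_of_le (fun _ => norm_nonneg _) (fun m => ?_)
    (Real.summable_pow_div_factorial |t|)
  have h1 : (1 : ℝ) ≤ (Nat.factorial m : ℝ) := by exact_mod_cast Nat.one_le_iff_ne_zero.2 (Nat.factorial_ne_zero m)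
  simp only [norm_div, norm_mul, norm_pow, norm_neg, norm_one, one_pow, one_mul, Real.norm_eq_abs,
    Nat.abs_cast]
  gcongr
  nlinarith

lemma hasSum_besselSeries (t : ℝ) :
    HasSum (fun m : ℕ => (-1 : ℝ) ^ m * t ^ m / ((Nat.factorial m : ℝ) ^ 2)) (besselSeries t) :=
  (summable_norm_besselSeries t).of_norm.hasSum

lemma measurable_besselSeries : Measurable besselSeries := by
  refine measurable_of_tendsto_metrizable
    (f := fun (n : ℕ) (t : ℝ) => ∑ m ∈ Finset.range n, (-1 : ℝ) ^ m * t ^ m / ((Nat.factorial m : ℝ) ^ 2)) ?_ ?_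
  · intro n; fun_prop
  · exact tendsto_pi_nhds.2 fun t => (hasSum_besselSeries t).tendsto_sum_nat

lemma wallis_mul_pow_div_factorial (t x : ℝ) (hx : x ^ 2 = 4 * t) (m : ℕ) :
    (∏ i ∈ Finset.range m, (2 * (i : ℝ) + 1) / (2 * i + 2)) * (x ^ (2 * m) / (2 * m).factorial)
      = t ^ m / ((Nat.factorial m : ℝ) ^ 2) := by
  induction m with
  | zero => simp
  | succ m ih =>
    rw [Finset.prod_range_succ, show 2 * (m + 1) = 2 * m + 1 + 1 by ring, Nat.factorial_succ,
      Nat.factorial_succ, Nat.factorial_succ, pow_succ t, pow_succ x, pow_succ x]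
    have h0 : ((2 * m).factorial : ℝ) ≠ 0 := by exact_mod_cast Nat.factorial_ne_zero _
    have h1 : ((m).factorial : ℝ) ≠ 0 := by exact_mod_cast Nat.factorial_ne_zero _
    push_cast
    have h2 : (m : ℝ) + 1 ≠ 0 := by positivity
    have h3 : (2 * m : ℝ) + 1 ≠ 0 := by positivity
    have h4 : (2 * m : ℝ) + 1 + 1 ≠ 0 := by positivity
    have h5 : (2 * m : ℝ) + 2 ≠ 0 := by positivity
    have : t ^ m * t / (((m : ℝ) + 1) * m.factorial) ^ 2 = t ^ m / (m.factorial : ℝ) ^ 2 * (t / ((m : ℝ) + 1) ^ 2) := by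
      field_simp
    rw [this, ← ih, show t = x ^ 2 / 4 by linarith]
    field_simp
    ring

lemma abs_besselSeries_le_one {t : ℝ} (ht : 0 ≤ t) : |besselSeries t| ≤ 1 := by
  set x := 2 * Real.sqrt t with hx
  have hx2 : x ^ 2 = 4 * t := by rw [hx, mul_pow, Real.sq_sqrt ht]; ring
  have hx0 : 0 ≤ x := by positivity
  have key := intervalIntegral.hasSum_integral_of_dominated_convergence (a := 0) (b := π)
    (μ := volume) (F := fun (m : ℕ) (θ : ℝ) => (-1 : ℝ) ^ m * (x * Real.sin θ) ^ (2 * m) / (2 * m).factorial)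
    (f := fun θ => Real.cos (x * Real.sin θ))
    (fun (m : ℕ) _ => x ^ (2 * m) / (2 * m).factorial)
    (fun m => by
      apply Continuous.aestronglyMeasurable; fun_prop)
    (fun m => by
      refine ae_of_all _ fun θ _ => ?_
      simp only [norm_div, norm_mul, norm_pow, norm_neg, norm_one, one_pow, one_mul,
        Real.norm_eq_abs, Nat.abs_cast, abs_of_nonneg hx0]
      gcongr
      exact mul_le_of_le_one_right hx0 (Real.abs_sin_le_one θ))
    (ae_of_all _ fun θ _ => (Real.summable_pow_div_factorial x).comp_injective
      (mul_right_injective₀ two_ne_zero))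
    (by simp)
    (ae_of_all _ fun θ _ => Real.hasSum_cos _)
  have h2 : ∀ m : ℕ, ∫ θ in (0:ℝ)..π, (-1 : ℝ) ^ m * (x * Real.sin θ) ^ (2 * m) / (2 * m).factorial
      = π * ((-1 : ℝ) ^ m * t ^ m / ((Nat.factorial m : ℝ) ^ 2)) := by
    intro m
    have : (fun θ : ℝ => (-1 : ℝ) ^ m * (x * Real.sin θ) ^ (2 * m) / (2 * m).factorial)
      = fun θ => ((-1 : ℝ) ^ m * (x ^ (2 * m) / (2 * m).factorial)) * Real.sin θ ^ (2 * m) := by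
      ext θ; rw [mul_pow]; ring
    rw [this, intervalIntegral.integral_const_mul, integral_sin_pow_even, mul_div_assoc,
      ← wallis_mul_pow_div_factorial t x hx2 m]
    ring
  simp_rw [h2] at key
  have h3 := key.unique ((hasSum_besselSeries t).mul_left π)
  have h4 : |∫ θ in (0:ℝ)..π, Real.cos (x * Real.sin θ)| ≤ 1 * |π - 0| := by
    rw [← Real.norm_eq_abs]
    exact intervalIntegral.norm_integral_le_of_norm_le_const fun θ _ => Real.abs_cos_le_one _
  rw [h3, abs_mul, sub_zero, abs_of_pos Real.pi_pos, mul_comm] at h4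
  exact le_of_mul_le_mul_right h4 Real.pi_pos

lemma hasSum_mul_prod_real {ι κ : Type*} {f : ι → ℝ} {g : κ → ℝ} {a b : ℝ} (hf : HasSum f a)
    (hg : HasSum g b) : HasSum (fun q : ι × κ => f q.1 * g q.2) (a * b) :=
  hf.mul hg (summable_mul_of_summable_norm hf.summable.norm hg.summable.norm)

lemma integrableOn_pow_mul_exp_neg_mul {c : ℝ} (hc : 0 < c) (n : ℕ) :
    IntegrableOn (fun x : ℝ => x ^ n * Real.exp (-(c * x))) (Set.Ioi 0) := by
  have := integrableOn_rpow_mul_exp_neg_mul_rpow (s := n) (p := 1) (b := c)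
    (by have : (0 : ℝ) ≤ n := n.cast_nonneg
        linarith) zero_lt_one hc
  simpa using this

lemma integral_pow_mul_exp_neg_mul {c : ℝ} (hc : 0 < c) (n : ℕ) :
    ∫ x in Set.Ioi (0 : ℝ), x ^ n * Real.exp (-(c * x)) = n.factorial / c ^ (n + 1) := by
  have := Real.integral_rpow_mul_exp_neg_mul_Ioi (a := n + 1) (r := c) (by positivity) hc
  simp only [add_sub_cancel_right, Real.rpow_natCast] at this
  rw [this, Real.Gamma_nat_eq_factorial, ← Nat.cast_succ, Real.rpow_natCast, one_div, inv_pow,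
    inv_mul_eq_div]

lemma factorial_mul_sum_choose_mul_choose (m n : ℕ) :
    m.factorial * n.factorial * ∑ j ∈ Finset.range (m + 1), m.choose j * n.choose j
      = (m + n).factorial := by
  have h : ∑ j ∈ Finset.range (m + 1), m.choose j * n.choose j = (m + n).choose m := by
    rw [Nat.add_choose_eq, Finset.Nat.sum_antidiagonal_eq_sum_range_succ_mk,
      ← Finset.sum_range_reflect]
    refine Finset.sum_congr rfl fun j hj => ?_
    have hj' : j ≤ m := by simpa [Nat.lt_succ_iff] using hj
    simp only [Nat.add_sub_cancel]
    rw [Nat.choose_symm hj']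
  rw [h, ← Nat.add_choose_mul_factorial_mul_factorial m n, Nat.choose_symm_add]
  ring

lemma factorial_add_le_two_pow_mul (m n : ℕ) :
    (m + n).factorial ≤ 2 ^ (m + n) * (m.factorial * n.factorial) := by
  rw [← Nat.add_choose_mul_factorial_mul_factorial m n, mul_assoc]
  exact Nat.mul_le_mul_right _ (Nat.choose_le_two_pow _ _)

lemma choose_div_factorial_add (m j : ℕ) :
    ((m + j).choose j : ℝ) / (m + j).factorial = 1 / (m.factorial * j.factorial) := by
  rw [← Nat.add_choose_mul_factorial_mul_factorial m j]
  have c0 : ((m + j).choose j : ℝ) ≠ 0 := by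
    exact_mod_cast (Nat.choose_pos (Nat.le_add_left j m)).ne'
  push_cast
  rw [mul_assoc, div_mul_eq_div_div, div_self c0]

lemma shifted_exp_mul_besselSeries_term (a b : ℝ) (j m n : ℕ) :
    (-1 : ℝ) ^ (m + j + (n + j)) * a ^ (m + j) * b ^ (n + j) *
        ((m + j).choose j * (n + j).choose j) / ((m + j).factorial * (n + j).factorial)
      = (-1 : ℝ) ^ j * (-(a * b)) ^ j / ((j.factorial : ℝ) ^ 2) *
        (((-a) ^ m / m.factorial) * ((-b) ^ n / n.factorial)) := by
  have e2 : (-1 : ℝ) ^ (m + j + (n + j)) * a ^ (m + j) * b ^ (n + j) *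
      ((m + j).choose j * (n + j).choose j) / ((m + j).factorial * (n + j).factorial)
      = (-1 : ℝ) ^ (m + j + (n + j)) * a ^ (m + j) * b ^ (n + j) *
        (((m + j).choose j : ℝ) / (m + j).factorial) *
        (((n + j).choose j : ℝ) / (n + j).factorial) := by
    ring
  have e3 : (-1 : ℝ) ^ (m + j + (n + j)) = (-1) ^ m * (-1) ^ n := by
    rw [show m + j + (n + j) = m + n + 2 * j by ring, pow_add, pow_add, pow_mul]; simp
  have e4 : (-1 : ℝ) ^ j * (-1) ^ j = 1 := by rw [← mul_pow]; simp
  have e5 : (-1 : ℝ) ^ j * ((-1) ^ j * (a * b) ^ j) = (a * b) ^ j := by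
    rw [← mul_assoc, e4, one_mul]
  rw [e2, choose_div_factorial_add, choose_div_factorial_add, e3, neg_pow a, neg_pow b,
    neg_pow (a * b), e5]
  ring

lemma hasSum_exp_mul_besselSeries (a b : ℝ) :
    HasSum (fun q : ℕ × ℕ => (-1 : ℝ) ^ (q.1 + q.2) * a ^ q.1 * b ^ q.2 * (q.1 + q.2).factorial
        / ((q.1.factorial : ℝ) ^ 2 * (q.2.factorial : ℝ) ^ 2))
      (Real.exp (-(a + b)) * besselSeries (-(a * b))) := by
  have hexp : ∀ x : ℝ, HasSum (fun n : ℕ => x ^ n / n.factorial) (Real.exp x) := fun x => by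
    rw [Real.exp_eq_exp_ℝ]; exact NormedSpace.expSeries_div_hasSum_exp x
  have h3 := hasSum_mul_prod_real (hasSum_besselSeries (-(a * b)))
    (hasSum_mul_prod_real (hexp (-a)) (hexp (-b)))
  let S : ℕ × (ℕ × ℕ) → ℝ := fun q => (-1 : ℝ) ^ (q.2.1 + q.2.2) * a ^ q.2.1 * b ^ q.2.2 *
    (q.2.1.choose q.1 * q.2.2.choose q.1) / (q.2.1.factorial * q.2.2.factorial)
  let Φ : ℕ × (ℕ × ℕ) → ℕ × (ℕ × ℕ) := fun q => (q.1, (q.2.1 + q.1, q.2.2 + q.1))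
  have hΦ : Function.Injective Φ := by
    rintro ⟨j, m, n⟩ ⟨j', m', n'⟩ h
    simp only [Φ, Prod.mk.injEq] at h ⊢
    omega
  have h4 : HasSum S (besselSeries (-(a * b)) * (Real.exp (-a) * Real.exp (-b))) := by
    rw [← hΦ.hasSum_iff]
    · convert h3 using 1
      ext ⟨j, m, n⟩
      exact shifted_exp_mul_besselSeries_term a b j m n
    · rintro ⟨j, m, n⟩ hx
      by_cases hj : j ≤ m ∧ j ≤ n
      · exact absurd ⟨(j, m - j, n - j), by simp [Φ, hj]⟩ hx
      · rcases not_and_or.1 hj with h | h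
        · simp [S, Nat.choose_eq_zero_of_lt (not_le.1 h)]
        · simp [S, Nat.choose_eq_zero_of_lt (not_le.1 h)]
  have h5 := (Equiv.prodComm (ℕ × ℕ) ℕ).hasSum_iff.2 h4
  rw [neg_add, Real.exp_add, mul_comm]
  refine h5.prod_fiberwise ?_
  rintro ⟨m, n⟩
  have hs : HasSum (fun j : ℕ => S (j, (m, n))) (∑ j ∈ Finset.range (m + 1), S (j, (m, n))) :=
    hasSum_sum_of_ne_finset_zero (fun j hj => by
      have : m < j := by simpa [Nat.lt_succ_iff] using hj
      simp [S, Nat.choose_eq_zero_of_lt this])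
  have hE : ∑ j ∈ Finset.range (m + 1), S (j, (m, n)) = (-1 : ℝ) ^ (m + n) * a ^ m * b ^ n *
      (m + n).factorial / ((m.factorial : ℝ) ^ 2 * (n.factorial : ℝ) ^ 2) := by
    have hc : (m.factorial : ℝ) * n.factorial *
        ∑ j ∈ Finset.range (m + 1), (m.choose j : ℝ) * n.choose j = (m + n).factorial := by
      exact_mod_cast factorial_mul_sum_choose_mul_choose m n
    have h0 : (m.factorial : ℝ) ≠ 0 := by positivity
    have h1 : (n.factorial : ℝ) ≠ 0 := by positivity
    simp only [S]
    rw [← Finset.sum_div, ← Finset.mul_sum, ← hc]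
    field_simp
  rw [hE] at hs
  exact hs

/-- The heat-type kernel `p e^{-p(u+v)} I₀(2 p √(uv))`. -/
noncomputable def weberKernel (p u v : ℝ) : ℝ :=
  p * (Real.exp (-(p * u + p * v)) * besselSeries (-((p * u) * (p * v))))

/-- Weber's second exponential integral for `J₀`. -/
lemma integral_exp_mul_besselSeries_mul {p : ℝ} (hp : 0 < p) {u v : ℝ} (hu : 0 ≤ u) (hv : 0 ≤ v) :
    ∫ x in Set.Ioi (0 : ℝ), Real.exp (-(p⁻¹ * x)) * (besselSeries (x * u) * besselSeries (x * v))
      = weberKernel p u v := by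
  have hp' : 0 < p⁻¹ := inv_pos.2 hp
  let A : ℕ → ℝ → ℝ := fun m t => (-1 : ℝ) ^ m * t ^ m / ((Nat.factorial m : ℝ) ^ 2)
  let B : ℕ × ℕ → ℝ := fun q => (-1 : ℝ) ^ (q.1 + q.2) * u ^ q.1 * v ^ q.2 /
    ((q.1.factorial : ℝ) ^ 2 * (q.2.factorial : ℝ) ^ 2)
  let F : ℕ × ℕ → ℝ → ℝ := fun q x => B q * (x ^ (q.1 + q.2) * Real.exp (-(p⁻¹ * x)))
  have hF : ∀ q x, F q x = Real.exp (-(p⁻¹ * x)) * (A q.1 (x * u) * A q.2 (x * v)) := by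
    intro q x; simp only [F, A, B]; rw [mul_pow, mul_pow]; ring
  have hsum : ∀ x, HasSum (fun q => F q x)
      (Real.exp (-(p⁻¹ * x)) * (besselSeries (x * u) * besselSeries (x * v))) := by
    intro x
    simp_rw [hF]
    exact (hasSum_mul_prod_real (hasSum_besselSeries (x * u))
      (hasSum_besselSeries (x * v))).mul_left (Real.exp (-(p⁻¹ * x)))
  have hint : ∀ q, IntegrableOn (F q) (Set.Ioi 0) := fun q =>
    (integrableOn_pow_mul_exp_neg_mul hp' _).const_mul _
  have hnorm : ∀ q, ∫ x in Set.Ioi (0 : ℝ), ‖F q x‖ = |B q| * ((q.1 + q.2).factorial / p⁻¹ ^ (q.1 + q.2 + 1)) := by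
    intro q
    rw [← integral_pow_mul_exp_neg_mul hp', ← integral_const_mul]
    refine setIntegral_congr_fun measurableSet_Ioi fun x hx => ?_
    simp only [F, norm_mul, Real.norm_eq_abs, Real.abs_exp, abs_pow, abs_of_pos (Set.mem_Ioi.1 hx)]
  have hB : ∀ q, |B q| = u ^ q.1 * v ^ q.2 / ((q.1.factorial : ℝ) ^ 2 * (q.2.factorial : ℝ) ^ 2) := by
    intro q
    simp only [B, abs_div, abs_mul, abs_pow, abs_neg, abs_one, one_pow, one_mul, abs_of_nonneg hu,
      abs_of_nonneg hv, Nat.abs_cast]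
  have hsumm : Summable fun q => ∫ x in Set.Ioi (0 : ℝ), ‖F q x‖ := by
    have hs := ((hasSum_mul_prod_real
      (Real.summable_pow_div_factorial (2 * (p * u))).hasSum
      (Real.summable_pow_div_factorial (2 * (p * v))).hasSum).mul_left p).summable
    refine Summable.of_nonneg_of_le (fun q => integral_nonneg fun _ => norm_nonneg _) (fun q => ?_) hs
    rw [hnorm, hB]
    have h1 : ((q.1 + q.2).factorial : ℝ) ≤ 2 ^ (q.1 + q.2) * (q.1.factorial * q.2.factorial) := by
      exact_mod_cast factorial_add_le_two_pow_mul q.1 q.2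
    have h0 : (0 : ℝ) < q.1.factorial := by positivity
    have h0' : (0 : ℝ) < q.2.factorial := by positivity
    calc _ ≤ u ^ q.1 * v ^ q.2 / ((q.1.factorial : ℝ) ^ 2 * (q.2.factorial : ℝ) ^ 2) *
          (2 ^ (q.1 + q.2) * (q.1.factorial * q.2.factorial) / p⁻¹ ^ (q.1 + q.2 + 1)) := by gcongr
      _ = _ := by
        rw [inv_pow, div_inv_eq_mul]
        field_simp
        ring
  have key := hasSum_integral_of_summable_integral_norm hint hsumm
  have h1 := (hasSum_exp_mul_besselSeries (p * u) (p * v)).mul_left p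
  rw [← integral_congr_ae (ae_of_all _ fun x => (hsum x).tsum_eq)]
  have hval : ∀ q : ℕ × ℕ, ∫ x in Set.Ioi (0 : ℝ), F q x =
      p * ((-1 : ℝ) ^ (q.1 + q.2) * (p * u) ^ q.1 * (p * v) ^ q.2 * (q.1 + q.2).factorial
        / ((q.1.factorial : ℝ) ^ 2 * (q.2.factorial : ℝ) ^ 2)) := by
    intro q
    simp only [F, B]
    rw [integral_const_mul, integral_pow_mul_exp_neg_mul hp', inv_pow, div_inv_eq_mul, mul_pow,
      mul_pow]
    ring
  simp_rw [hval] at key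
  exact key.unique h1

lemma HasSum.of_eq_real {ι : Type*} {f g : ι → ℝ} {a b : ℝ} (h : HasSum f a)
    (hfg : ∀ i, g i = f i) (hab : b = a) : HasSum g b := by
  rw [funext hfg, hab]; exact h

lemma hasSum_weberKernel (p u v : ℝ) :
    HasSum (fun j : ℕ => p * Real.exp (-(p * u)) * ((p * u) ^ j * p ^ j / (j.factorial : ℝ) ^ 2) *
      (v ^ j * Real.exp (-(p * v)))) (weberKernel p u v) := by
  have := ((hasSum_besselSeries (-((p * u) * (p * v)))).mul_left
    (p * Real.exp (-(p * u + p * v))))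
  unfold weberKernel
  rw [← mul_assoc]
  refine this.of_eq_real (fun j => ?_) rfl
  have e4 : (-1 : ℝ) ^ j * (-1) ^ j = 1 := by rw [← mul_pow]; simp
  have e5 : (-1 : ℝ) ^ j * (-((p * u) * (p * v))) ^ j = (p * u) ^ j * (p ^ j * v ^ j) := by
    rw [neg_pow (p * u * (p * v)), ← mul_assoc, e4, one_mul, mul_pow, mul_pow p v]
  rw [e5, neg_add, Real.exp_add]
  ring

lemma weberKernel_nonneg {p : ℝ} (hp : 0 < p) {u v : ℝ} (hu : 0 ≤ u) (hv : 0 ≤ v) :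
    0 ≤ weberKernel p u v :=
  (hasSum_weberKernel p u v).nonneg fun j => by positivity

lemma integral_pow_mul_weberKernel {p : ℝ} (hp : 0 < p) {u : ℝ} (hu : 0 ≤ u) (r : ℕ) {S : ℝ}
    (hS : HasSum (fun j : ℕ => (p * u) ^ j * (j + r).factorial / (j.factorial : ℝ) ^ 2) S) :
    ∫ v in Set.Ioi (0 : ℝ), v ^ r * weberKernel p u v = Real.exp (-(p * u)) * S / p ^ r := by
  let F : ℕ → ℝ → ℝ := fun j v =>
    (p * Real.exp (-(p * u)) * ((p * u) ^ j * p ^ j / (j.factorial : ℝ) ^ 2)) *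
      (v ^ (j + r) * Real.exp (-(p * v)))
  have hsum : ∀ v, HasSum (fun j => F j v) (v ^ r * weberKernel p u v) := by
    intro v
    refine ((hasSum_weberKernel p u v).mul_left (v ^ r)).of_eq_real (fun j => ?_) rfl
    simp only [F]
    ring
  have hint : ∀ j, IntegrableOn (F j) (Set.Ioi 0) := fun j =>
    (integrableOn_pow_mul_exp_neg_mul hp _).const_mul _
  have hval : ∀ j, ∫ v in Set.Ioi (0 : ℝ), F j v = Real.exp (-(p * u)) *
      ((p * u) ^ j * (j + r).factorial / (j.factorial : ℝ) ^ 2) / p ^ r := by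
    intro j
    simp only [F]
    rw [integral_const_mul, integral_pow_mul_exp_neg_mul hp]
    field_simp
    ring
  have hnorm : ∀ j, ∫ v in Set.Ioi (0 : ℝ), ‖F j v‖ = ∫ v in Set.Ioi (0 : ℝ), F j v := by
    intro j
    refine setIntegral_congr_fun measurableSet_Ioi fun x hx => ?_
    have hx' : 0 < x := hx
    exact Real.norm_of_nonneg (by positivity)
  have hS' := (hS.mul_left (Real.exp (-(p * u)))).div_const (p ^ r)
  have key := hasSum_integral_of_summable_integral_norm hint (by
    simp_rw [hnorm, hval]; exact hS'.summable)
  simp_rw [hval] at key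
  rw [← integral_congr_ae (ae_of_all _ fun x => (hsum x).tsum_eq)]
  exact key.unique hS'

lemma hasSum_poisson_mean (a : ℝ) :
    HasSum (fun j : ℕ => a ^ j * (j : ℝ) / (j.factorial : ℝ)) (a * Real.exp a) := by
  have hexp : HasSum (fun n : ℕ => a ^ n / n.factorial) (Real.exp a) := by
    rw [Real.exp_eq_exp_ℝ]; exact NormedSpace.expSeries_div_hasSum_exp a
  rw [hasSum_nat_add_iff' 1 |>.symm]
  simp only [Finset.range_one, Finset.sum_singleton, Nat.cast_zero, mul_zero, zero_div, sub_zero]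
  refine (hexp.mul_left a).of_eq_real (fun j => ?_) rfl
  rw [Nat.factorial_succ]
  push_cast
  have h2 : (j : ℝ) + 1 ≠ 0 := by positivity
  field_simp
  ring

lemma hasSum_poisson_second (a : ℝ) :
    HasSum (fun j : ℕ => a ^ j * ((j : ℝ) * j) / (j.factorial : ℝ)) (a * (a + 1) * Real.exp a) := by
  have hexp : HasSum (fun n : ℕ => a ^ n / n.factorial) (Real.exp a) := by
    rw [Real.exp_eq_exp_ℝ]; exact NormedSpace.expSeries_div_hasSum_exp a
  rw [hasSum_nat_add_iff' 1 |>.symm]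
  simp only [Finset.range_one, Finset.sum_singleton, Nat.cast_zero, mul_zero, zero_div, sub_zero]
  have := ((hasSum_poisson_mean a).add hexp).mul_left a
  refine this.of_eq_real (fun j => ?_) ?_
  · rw [Nat.factorial_succ]
    push_cast
    have h2 : (j : ℝ) + 1 ≠ 0 := by positivity
    field_simp
    ring
  · ring

lemma hasSum_weber_moment_zero (a : ℝ) :
    HasSum (fun j : ℕ => a ^ j * (j + 0).factorial / (j.factorial : ℝ) ^ 2) (Real.exp a) := by
  have hexp : HasSum (fun n : ℕ => a ^ n / n.factorial) (Real.exp a) := by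
    rw [Real.exp_eq_exp_ℝ]; exact NormedSpace.expSeries_div_hasSum_exp a
  refine hexp.of_eq_real (fun j => ?_) rfl
  have h0 : (j.factorial : ℝ) ≠ 0 := by positivity
  simp only [add_zero]
  field_simp

lemma hasSum_weber_moment_one (a : ℝ) :
    HasSum (fun j : ℕ => a ^ j * (j + 1).factorial / (j.factorial : ℝ) ^ 2)
      ((a + 1) * Real.exp a) := by
  have hexp : HasSum (fun n : ℕ => a ^ n / n.factorial) (Real.exp a) := by
    rw [Real.exp_eq_exp_ℝ]; exact NormedSpace.expSeries_div_hasSum_exp a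
  refine ((hasSum_poisson_mean a).add hexp).of_eq_real (fun j => ?_) ?_
  · have h0 : (j.factorial : ℝ) ≠ 0 := by positivity
    rw [Nat.factorial_succ]
    push_cast
    field_simp
  · ring

lemma hasSum_weber_moment_two (a : ℝ) :
    HasSum (fun j : ℕ => a ^ j * (j + 2).factorial / (j.factorial : ℝ) ^ 2)
      ((a ^ 2 + 4 * a + 2) * Real.exp a) := by
  have hexp : HasSum (fun n : ℕ => a ^ n / n.factorial) (Real.exp a) := by
    rw [Real.exp_eq_exp_ℝ]; exact NormedSpace.expSeries_div_hasSum_exp a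
  refine (((hasSum_poisson_second a).add ((hasSum_poisson_mean a).mul_left 3)).add
    (hexp.mul_left 2)).of_eq_real (fun j => ?_) ?_
  · have h0 : (j.factorial : ℝ) ≠ 0 := by positivity
    rw [Nat.factorial_succ, Nat.factorial_succ]
    push_cast
    field_simp
    ring
  · ring

lemma measurable_weberKernel (p : ℝ) : Measurable (fun q : ℝ × ℝ => weberKernel p q.1 q.2) := by
  unfold weberKernel
  have := measurable_besselSeries
  fun_prop

lemma integral_weberKernel {p : ℝ} (hp : 0 < p) {u : ℝ} (hu : 0 ≤ u) :
    ∫ v in Set.Ioi (0 : ℝ), weberKernel p u v = 1 := by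
  have h := integral_pow_mul_weberKernel hp hu 0 (hasSum_weber_moment_zero (p * u))
  simpa [← Real.exp_add] using h

lemma integrableOn_weberKernel {p : ℝ} (hp : 0 < p) {u : ℝ} (hu : 0 ≤ u) :
    IntegrableOn (fun v => weberKernel p u v) (Set.Ioi (0 : ℝ)) :=
  Integrable.of_integral_ne_zero (by rw [integral_weberKernel hp hu]; exact one_ne_zero)

lemma integrableOn_sq_sub_mul_weberKernel {p : ℝ} (hp : 0 < p) {u : ℝ} (hu : 0 ≤ u) :
    IntegrableOn (fun v => (v - u) ^ 2 * weberKernel p u v) (Set.Ioi (0 : ℝ)) ∧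
    ∫ v in Set.Ioi (0 : ℝ), (v - u) ^ 2 * weberKernel p u v = 2 * u / p + 2 / p ^ 2 := by
  have i0 := integrableOn_weberKernel hp hu
  have e0 := integral_weberKernel hp hu
  have e1 := integral_pow_mul_weberKernel hp hu 1 (hasSum_weber_moment_one (p * u))
  have e2 := integral_pow_mul_weberKernel hp hu 2 (hasSum_weber_moment_two (p * u))
  have hE : Real.exp (-(p * u)) * Real.exp (p * u) = 1 := by rw [← Real.exp_add]; simp
  rw [show Real.exp (-(p * u)) * ((p * u + 1) * Real.exp (p * u)) / p ^ 1 =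
    (Real.exp (-(p * u)) * Real.exp (p * u)) * (p * u + 1) / p by ring, hE, one_mul] at e1
  rw [show Real.exp (-(p * u)) * (((p * u) ^ 2 + 4 * (p * u) + 2) * Real.exp (p * u)) / p ^ 2 =
    (Real.exp (-(p * u)) * Real.exp (p * u)) * ((p * u) ^ 2 + 4 * (p * u) + 2) / p ^ 2 by ring,
    hE, one_mul] at e2
  have hpu : 0 ≤ p * u := by positivity
  have i1 : IntegrableOn (fun v => v ^ 1 * weberKernel p u v) (Set.Ioi (0 : ℝ)) :=
    Integrable.of_integral_ne_zero (by rw [e1]; positivity)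
  have i2 : IntegrableOn (fun v => v ^ 2 * weberKernel p u v) (Set.Ioi (0 : ℝ)) :=
    Integrable.of_integral_ne_zero (by rw [e2]; positivity)
  have hf : (fun v => (v - u) ^ 2 * weberKernel p u v) = fun v =>
      v ^ 2 * weberKernel p u v - (2 * u) * (v ^ 1 * weberKernel p u v) + u ^ 2 * weberKernel p u v := by
    funext v; ring
  rw [hf]
  have i3 : IntegrableOn (fun v => v ^ 2 * weberKernel p u v -
      (2 * u) * (v ^ 1 * weberKernel p u v)) (Set.Ioi (0 : ℝ)) := i2.sub (i1.const_mul _)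
  refine ⟨i3.add (i0.const_mul _), ?_⟩
  rw [integral_add i3 (i0.const_mul _), integral_sub i2 (i1.const_mul _),
    integral_const_mul, integral_const_mul, e0, e1, e2]
  field_simp
  ring

lemma tendsto_integral_mul_weberKernel {f : ℝ → ℝ} (hf : Measurable f) {M : ℝ}
    (hM : ∀ u, 0 < u → |f u| ≤ M) {u : ℝ} (hu : 0 < u) (hc : ContinuousAt f u) :
    Tendsto (fun n : ℕ => ∫ v in Set.Ioi (0 : ℝ), f v * weberKernel (n + 1) u v) atTop
      (𝓝 (f u)) := by
  have hM0 : 0 ≤ M := (abs_nonneg _).trans (hM u hu)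
  have hp : ∀ n : ℕ, (0 : ℝ) < n + 1 := fun n => by positivity
  rw [Metric.tendsto_atTop]
  intro η hη
  obtain ⟨d, hd, hfd⟩ := Metric.continuousAt_iff.1 hc (η / 2) (by positivity)
  have hlim : Tendsto (fun n : ℕ => 2 * M / d ^ 2 * (2 * u / ((n : ℝ) + 1) + 2 / ((n : ℝ) + 1) ^ 2))
      atTop (𝓝 0) := by
    have h1 : Tendsto (fun n : ℕ => ((n : ℝ) + 1)⁻¹) atTop (𝓝 0) := by
      simpa using tendsto_one_div_add_atTop_nhds_zero_nat (𝕜 := ℝ)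
    have h2 := ((h1.const_mul (2 * u)).add ((h1.pow 2).const_mul 2)).const_mul (2 * M / d ^ 2)
    simpa [div_eq_mul_inv] using h2
  obtain ⟨N, hN⟩ := Metric.tendsto_atTop.1 hlim (η / 2) (by positivity)
  refine ⟨N, fun n hn => ?_⟩
  set p : ℝ := (n : ℝ) + 1 with hpdef
  have hp0 : 0 < p := hp n
  have iK := integrableOn_weberKernel hp0 hu.le
  obtain ⟨iQ, eQ⟩ := integrableOn_sq_sub_mul_weberKernel hp0 hu.le
  have iF : IntegrableOn (fun v => f v * weberKernel p u v) (Set.Ioi (0 : ℝ)) := by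
    refine Integrable.bdd_mul (c := M) iK hf.aestronglyMeasurable ?_
    filter_upwards [ae_restrict_mem measurableSet_Ioi] with v hv using hM v hv
  have h1 : (∫ v in Set.Ioi (0 : ℝ), f v * weberKernel p u v) - f u
      = ∫ v in Set.Ioi (0 : ℝ), (f v * weberKernel p u v - f u * weberKernel p u v) := by
    rw [integral_sub iF (iK.const_mul _), integral_const_mul, integral_weberKernel hp0 hu.le, mul_one]
  have h2 : ‖∫ v in Set.Ioi (0 : ℝ), (f v * weberKernel p u v - f u * weberKernel p u v)‖
      ≤ ∫ v in Set.Ioi (0 : ℝ), (η / 2 * weberKernel p u v +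
        2 * M / d ^ 2 * ((v - u) ^ 2 * weberKernel p u v)) := by
    refine norm_integral_le_of_norm_le ((iK.const_mul _).add (iQ.const_mul _)) ?_
    filter_upwards [ae_restrict_mem measurableSet_Ioi] with v hv
    have hv' : 0 < v := hv
    have hK := weberKernel_nonneg hp0 hu.le hv'.le
    rw [← sub_mul, norm_mul, Real.norm_of_nonneg hK, ← mul_assoc, ← add_mul]
    refine mul_le_mul_of_nonneg_right ?_ hK
    rcases lt_or_ge (dist v u) d with hlt | hge
    · have : ‖f v - f u‖ < η / 2 := hfd hlt
      have : 0 ≤ 2 * M / d ^ 2 * (v - u) ^ 2 := by positivity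
      linarith
    · have h3 : ‖f v - f u‖ ≤ 2 * M := by
        refine (norm_sub_le _ _).trans ?_
        have := hM v hv'
        have := hM u hu
        simp only [Real.norm_eq_abs]; linarith
      have h4 : 1 ≤ (v - u) ^ 2 / d ^ 2 := by
        rw [one_le_div (by positivity), ← sq_abs (v - u)]
        exact pow_le_pow_left₀ hd.le hge 2
      have : 2 * M * 1 ≤ 2 * M * ((v - u) ^ 2 / d ^ 2) := by gcongr
      have e : 2 * M / d ^ 2 * (v - u) ^ 2 = 2 * M * ((v - u) ^ 2 / d ^ 2) := by ring
      rw [e]; linarith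
  rw [integral_add (iK.const_mul _) (iQ.const_mul _), integral_const_mul, integral_const_mul,
    integral_weberKernel hp0 hu.le, eQ] at h2
  have h5 := hN n hn
  rw [Real.dist_eq, sub_zero] at h5
  have h6 := (le_abs_self _).trans_lt h5
  rw [dist_eq_norm, h1]
  linarith

lemma ae_pos_prod_prod : ∀ᵐ q : ℝ × (ℝ × ℝ) ∂((volume.restrict (Set.Ioi (0:ℝ))).prod
    ((volume.restrict (Set.Ioi (0:ℝ))).prod (volume.restrict (Set.Ioi (0:ℝ))))),
      0 < q.1 ∧ 0 < q.2.1 ∧ 0 < q.2.2 := by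
  rw [Measure.prod_restrict, Measure.prod_restrict]
  filter_upwards [ae_restrict_mem (measurableSet_Ioi.prod (measurableSet_Ioi.prod measurableSet_Ioi))]
    with q hq
  exact ⟨hq.1, hq.2.1, hq.2.2⟩

lemma ae_pos_prod : ∀ᵐ q : ℝ × ℝ ∂((volume.restrict (Set.Ioi (0:ℝ))).prod
    (volume.restrict (Set.Ioi (0:ℝ)))), 0 < q.1 ∧ 0 < q.2 := by
  rw [Measure.prod_restrict]
  filter_upwards [ae_restrict_mem (measurableSet_Ioi.prod measurableSet_Ioi)] with q hq
  exact ⟨hq.1, hq.2⟩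

lemma integral_exp_mul_hankel_sq {f : ℝ → ℝ} (hf : Measurable f)
    (hint : IntegrableOn f (Set.Ioi 0)) {p : ℝ} (hp : 0 < p) :
    IntegrableOn (fun x => Real.exp (-(p⁻¹ * x)) *
      (∫ u in Set.Ioi (0 : ℝ), f u * besselSeries (x * u)) ^ 2) (Set.Ioi 0) ∧
    ∫ x in Set.Ioi (0 : ℝ), Real.exp (-(p⁻¹ * x)) *
      (∫ u in Set.Ioi (0 : ℝ), f u * besselSeries (x * u)) ^ 2 =
    ∫ u in Set.Ioi (0 : ℝ), f u * ∫ v in Set.Ioi (0 : ℝ), f v * weberKernel p u v := by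
  set μ := volume.restrict (Set.Ioi (0:ℝ)) with hμ
  let G : ℝ → ℝ × ℝ → ℝ := fun x q => Real.exp (-(p⁻¹ * x)) *
    ((f q.1 * besselSeries (x * q.1)) * (f q.2 * besselSeries (x * q.2)))
  have hJ := measurable_besselSeries
  have hGm : Measurable (Function.uncurry G) := by
    simp only [G, Function.uncurry_def]; fun_prop
  have hexp : Integrable (fun x : ℝ => Real.exp (-(p⁻¹ * x))) μ := by
    simpa [IntegrableOn] using integrableOn_pow_mul_exp_neg_mul (inv_pos.2 hp) 0
  have hG : Integrable (Function.uncurry G) (μ.prod (μ.prod μ)) := by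
    have hdom : Integrable (fun q : ℝ × (ℝ × ℝ) => Real.exp (-(p⁻¹ * q.1)) * (f q.2.1 * f q.2.2))
        (μ.prod (μ.prod μ)) := hexp.mul_prod (hint.mul_prod hint)
    refine hdom.mono hGm.aestronglyMeasurable ?_
    filter_upwards [ae_pos_prod_prod] with q hq
    obtain ⟨h0, h1, h2⟩ := hq
    simp only [G, Function.uncurry, norm_mul, Real.norm_eq_abs]
    have b1 := abs_besselSeries_le_one (mul_nonneg h0.le h1.le)
    have b2 := abs_besselSeries_le_one (mul_nonneg h0.le h2.le)
    gcongr
    · exact mul_le_of_le_one_right (abs_nonneg _) b1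
    · exact mul_le_of_le_one_right (abs_nonneg _) b2
  have hin : ∀ x, ∫ q, G x q ∂(μ.prod μ) = Real.exp (-(p⁻¹ * x)) *
      (∫ u, f u * besselSeries (x * u) ∂μ) ^ 2 := by
    intro x
    simp only [G]
    rw [integral_const_mul, integral_prod_mul (fun u => f u * besselSeries (x * u))
      (fun u => f u * besselSeries (x * u)), sq]
  have hout : (fun q : ℝ × ℝ => ∫ x, G x q ∂μ) =ᵐ[μ.prod μ]
      fun q => f q.1 * (f q.2 * weberKernel p q.1 q.2) := by
    filter_upwards [ae_pos_prod] with q hq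
    rw [← integral_exp_mul_besselSeries_mul hp hq.1.le hq.2.le, ← integral_const_mul,
      ← integral_const_mul]
    congr 1; funext x; simp only [G]; ring
  refine ⟨?_, ?_⟩
  · have := hG.integral_prod_left
    exact this.congr (ae_of_all _ hin)
  · have hswap := integral_integral_swap hG
    simp_rw [hin] at hswap
    rw [hswap, integral_congr_ae hout,
      integral_prod _ (hG.integral_prod_right.congr hout)]
    simp_rw [integral_const_mul]

/-- Plancherel's theorem for the Hankel transform of order zero. -/
theorem hankel_plancherel {f : ℝ → ℝ} (hf : Measurable f) {M : ℝ}
    (hM : ∀ u, 0 < u → |f u| ≤ M) (hint : IntegrableOn f (Set.Ioi 0))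
    (hc : ∀ᵐ u ∂(volume.restrict (Set.Ioi (0 : ℝ))), ContinuousAt f u) :
    IntegrableOn (fun x => (∫ u in Set.Ioi (0 : ℝ), f u * besselSeries (x * u)) ^ 2) (Set.Ioi 0) ∧
    IntegrableOn (fun u => f u ^ 2) (Set.Ioi 0) ∧
    ∫ x in Set.Ioi (0 : ℝ), (∫ u in Set.Ioi (0 : ℝ), f u * besselSeries (x * u)) ^ 2 =
      ∫ u in Set.Ioi (0 : ℝ), f u ^ 2 := by
  set φ : ℝ → ℝ := fun x => ∫ u in Set.Ioi (0 : ℝ), f u * besselSeries (x * u) with hφ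
  have hJ := measurable_besselSeries
  have hφm : Measurable φ := by
    have : StronglyMeasurable (Function.uncurry fun x u => f u * besselSeries (x * u)) := by
      apply Measurable.stronglyMeasurable
      simp only [Function.uncurry_def]; fun_prop
    exact this.integral_prod_right.measurable
  have hM0 : 0 ≤ M := (abs_nonneg _).trans (hM 1 one_pos)
  have hpn : ∀ n : ℕ, (0 : ℝ) < n + 1 := fun n => by positivity
  have hf2 : IntegrableOn (fun u => f u ^ 2) (Set.Ioi 0) := by
    have := Integrable.bdd_mul (c := M) hint hf.aestronglyMeasurable (by
      filter_upwards [ae_restrict_mem measurableSet_Ioi] with v hv using hM v hv)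
    simp only [sq]
    exact this
  have hlim : Tendsto (fun n : ℕ => ∫ x in Set.Ioi (0 : ℝ),
      Real.exp (-(((n : ℝ) + 1)⁻¹ * x)) * φ x ^ 2) atTop
      (𝓝 (∫ u in Set.Ioi (0 : ℝ), f u ^ 2)) := by
    have he : ∀ n : ℕ, ∫ x in Set.Ioi (0 : ℝ), Real.exp (-(((n : ℝ) + 1)⁻¹ * x)) * φ x ^ 2 =
      ∫ u in Set.Ioi (0 : ℝ), f u * ∫ v in Set.Ioi (0 : ℝ), f v * weberKernel (n + 1) u v :=
      fun n => (integral_exp_mul_hankel_sq hf hint (hpn n)).2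
    simp_rw [he]
    refine tendsto_integral_of_dominated_convergence (fun u => |f u| * M) (fun n => ?_)
      (hint.norm.mul_const M) (fun n => ?_) ?_
    · have : StronglyMeasurable (Function.uncurry fun u v => f v * weberKernel (n + 1) u v) := by
        apply Measurable.stronglyMeasurable
        have := measurable_weberKernel ((n : ℝ) + 1)
        simp only [Function.uncurry_def]; fun_prop
      exact (hf.mul this.integral_prod_right.measurable).aestronglyMeasurable
    · filter_upwards [ae_restrict_mem measurableSet_Ioi] with u hu
      have hu' : 0 < u := hu
      rw [norm_mul, Real.norm_eq_abs]
      gcongr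
      have iK := integrableOn_weberKernel (hpn n) hu'.le
      have : ‖∫ v in Set.Ioi (0 : ℝ), f v * weberKernel (n + 1) u v‖ ≤
          ∫ v in Set.Ioi (0 : ℝ), M * weberKernel (n + 1) u v := by
        refine norm_integral_le_of_norm_le (iK.const_mul _) ?_
        filter_upwards [ae_restrict_mem measurableSet_Ioi] with v hv
        have hK := weberKernel_nonneg (hpn n) hu'.le (le_of_lt hv)
        rw [norm_mul, Real.norm_of_nonneg hK]
        exact mul_le_mul_of_nonneg_right (hM v hv) hK
      rwa [integral_const_mul, integral_weberKernel (hpn n) hu'.le, mul_one] at this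
    · filter_upwards [ae_restrict_mem measurableSet_Ioi, hc] with u hu hcu
      rw [sq]
      exact (tendsto_integral_mul_weberKernel hf hM hu hcu).const_mul (f u)
  have hmono := lintegral_tendsto_of_tendsto_of_monotone (μ := volume.restrict (Set.Ioi (0:ℝ)))
    (f := fun (n : ℕ) x => ENNReal.ofReal (Real.exp (-(((n : ℝ) + 1)⁻¹ * x)) * φ x ^ 2))
    (F := fun x => ENNReal.ofReal (φ x ^ 2))
    (fun n => by fun_prop)
    (by
      filter_upwards [ae_restrict_mem measurableSet_Ioi] with x hx
      have hx' : 0 < x := hx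
      intro m n hmn
      have : (m : ℝ) ≤ n := by exact_mod_cast hmn
      dsimp only
      gcongr)
    (ae_of_all _ fun x => by
      refine ENNReal.tendsto_ofReal ?_
      have h1 : Tendsto (fun n : ℕ => ((n : ℝ) + 1)⁻¹) atTop (𝓝 0) := by
        simpa using tendsto_one_div_add_atTop_nhds_zero_nat (𝕜 := ℝ)
      have h2 := ((Real.continuous_exp.tendsto _).comp (h1.mul_const x).neg).mul_const (φ x ^ 2)
      simpa [Function.comp_def] using h2)
  have hofReal : ∀ n : ℕ, ∫⁻ x in Set.Ioi (0:ℝ), ENNReal.ofReal (Real.exp (-(((n : ℝ) + 1)⁻¹ * x)) * φ x ^ 2)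
      = ENNReal.ofReal (∫ x in Set.Ioi (0 : ℝ), Real.exp (-(((n : ℝ) + 1)⁻¹ * x)) * φ x ^ 2) :=
    fun n => (ofReal_integral_eq_lintegral_ofReal (integral_exp_mul_hankel_sq hf hint (hpn n)).1
      (ae_of_all _ fun x => by positivity)).symm
  simp_rw [hofReal] at hmono
  have heq := tendsto_nhds_unique hmono (ENNReal.tendsto_ofReal hlim)
  have hφi : IntegrableOn (fun x => φ x ^ 2) (Set.Ioi 0) := by
    refine ⟨(hφm.pow_const 2).aestronglyMeasurable, ?_⟩
    rw [hasFiniteIntegral_iff_ofReal (ae_of_all _ fun x => by positivity), heq]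
    exact ENNReal.ofReal_lt_top
  refine ⟨hφi, hf2, ?_⟩
  rw [integral_eq_lintegral_of_nonneg_ae (ae_of_all _ fun x => by positivity)
    (hφm.pow_const 2).aestronglyMeasurable, heq, ENNReal.toReal_ofReal]
  exact integral_nonneg fun u => by positivity

/-- `g x` agrees with a polynomial in `log x` on `[1, ∞)`, up to a power-saving error. -/
def HasLogPolyExpansion (g : ℝ → ℝ) : Prop :=
  ∃ (Q : Polynomial ℝ) (δ : ℝ), 0 < δ ∧
    (fun x => g x - Q.eval (Real.log x)) =O[𝓟 (Set.Ici 1)] fun x => x ^ (-δ)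

lemma isBigO_rpow_of_le {a b : ℝ} (h : a ≤ b) :
    (fun x : ℝ => x ^ a) =O[𝓟 (Set.Ici 1)] fun x => x ^ b := by
  refine isBigO_principal.2 ⟨1, fun x hx => ?_⟩
  have hx : (1:ℝ) ≤ x := hx
  rw [one_mul, Real.norm_of_nonneg (by positivity), Real.norm_of_nonneg (by positivity)]
  exact Real.rpow_le_rpow_of_exponent_le hx h

lemma isBigO_rpow_mul (a b : ℝ) :
    (fun x : ℝ => x ^ a * x ^ b) =O[𝓟 (Set.Ici 1)] fun x => x ^ (a + b) := by
  refine isBigO_principal.2 ⟨1, fun x hx => ?_⟩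
  have hx : (1:ℝ) ≤ x := hx
  rw [one_mul, Real.rpow_add (by linarith)]

lemma isBigO_eval_log (Q : Polynomial ℝ) {η : ℝ} (hη : 0 < η) :
    (fun x : ℝ => Q.eval (Real.log x)) =O[𝓟 (Set.Ici 1)] fun x => x ^ η := by
  induction Q using Polynomial.induction_on' with
  | add p q hp hq => simpa only [Polynomial.eval_add] using hp.add hq
  | monomial n a =>
    refine isBigO_principal.2 ⟨|a| * (n.factorial / η ^ n), fun x hx => ?_⟩
    have hx : (1:ℝ) ≤ x := hx
    have hl : 0 ≤ Real.log x := Real.log_nonneg hx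
    have h := Real.pow_div_factorial_le_exp (η * Real.log x) (by positivity) n
    rw [mul_comm η, ← Real.rpow_def_of_pos (by linarith), div_le_iff₀ (by positivity),
      mul_pow] at h
    rw [Polynomial.eval_monomial, norm_mul, Real.norm_eq_abs, Real.norm_of_nonneg (by positivity),
      Real.norm_of_nonneg (by positivity), mul_assoc]
    gcongr
    rw [div_mul_eq_mul_div, le_div_iff₀ (by positivity)]
    linarith

lemma HasLogPolyExpansion.of_isBigO {g : ℝ → ℝ} {δ : ℝ} (hδ : 0 < δ)
    (h : g =O[𝓟 (Set.Ici 1)] fun x => x ^ (-δ)) : HasLogPolyExpansion g :=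
  ⟨0, δ, hδ, by simpa using h⟩

lemma HasLogPolyExpansion.congr {f g : ℝ → ℝ} (hf : HasLogPolyExpansion f)
    (h : ∀ x, 1 ≤ x → g x = f x) : HasLogPolyExpansion g := by
  obtain ⟨Q, δ, hδ, hQ⟩ := hf
  refine ⟨Q, δ, hδ, hQ.congr' ?_ EventuallyEq.rfl⟩
  exact eventually_principal.2 fun x hx => by simp only [h x hx]

lemma hasLogPolyExpansion_eval (Q : Polynomial ℝ) :
    HasLogPolyExpansion fun x => Q.eval (Real.log x) :=
  ⟨Q, 1, one_pos, by simpa using isBigO_zero _ _⟩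

lemma hasLogPolyExpansion_const (c : ℝ) : HasLogPolyExpansion fun _ => c := by
  simpa using hasLogPolyExpansion_eval (Polynomial.C c)

lemma hasLogPolyExpansion_log_pow (n : ℕ) : HasLogPolyExpansion fun x => Real.log x ^ n := by
  simpa using hasLogPolyExpansion_eval (Polynomial.X ^ n)

lemma HasLogPolyExpansion.add {f g : ℝ → ℝ} (hf : HasLogPolyExpansion f)
    (hg : HasLogPolyExpansion g) : HasLogPolyExpansion fun x => f x + g x := by
  obtain ⟨P, δ, hδ, hP⟩ := hf
  obtain ⟨Q, ε, hε, hQ⟩ := hg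
  refine ⟨P + Q, min δ ε, lt_min hδ hε, ?_⟩
  have h1 := hP.trans (isBigO_rpow_of_le (neg_le_neg (min_le_left δ ε)))
  have h2 := hQ.trans (isBigO_rpow_of_le (neg_le_neg (min_le_right δ ε)))
  refine (h1.add h2).congr_left fun x => ?_
  rw [Polynomial.eval_add]; ring

lemma HasLogPolyExpansion.mul {f g : ℝ → ℝ} (hf : HasLogPolyExpansion f)
    (hg : HasLogPolyExpansion g) : HasLogPolyExpansion fun x => f x * g x := by
  obtain ⟨P, δ, hδ, hP⟩ := hf
  obtain ⟨Q, ε, hε, hQ⟩ := hg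
  set θ := min δ ε with hθdef
  have hθ : 0 < θ := lt_min hδ hε
  have h1 := hP.trans (isBigO_rpow_of_le (neg_le_neg (min_le_left δ ε)))
  have h2 := hQ.trans (isBigO_rpow_of_le (neg_le_neg (min_le_right δ ε)))
  have e1 := isBigO_eval_log P (half_pos hθ)
  have e2 := isBigO_eval_log Q (half_pos hθ)
  have c {F G : ℝ → ℝ} {a b : ℝ} (hF : F =O[𝓟 (Set.Ici 1)] fun x => x ^ a)
      (hG : G =O[𝓟 (Set.Ici 1)] fun x => x ^ b) (hab : a + b ≤ -(θ / 2)) :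
      (fun x => F x * G x) =O[𝓟 (Set.Ici 1)] fun x => x ^ (-(θ / 2)) :=
    ((hF.mul hG).trans (isBigO_rpow_mul a b)).trans (isBigO_rpow_of_le hab)
  refine ⟨P * Q, θ / 2, half_pos hθ, ?_⟩
  refine (((c h1 h2 (by linarith)).add (c e1 h2 (by linarith))).add
    (c h1 e2 (by linarith))).congr_left fun x => ?_
  rw [Polynomial.eval_mul]; ring

lemma HasLogPolyExpansion.const_mul {f : ℝ → ℝ} (c : ℝ) (hf : HasLogPolyExpansion f) :
    HasLogPolyExpansion fun x => c * f x :=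
  (hasLogPolyExpansion_const c).mul hf

lemma HasLogPolyExpansion.sub {f g : ℝ → ℝ} (hf : HasLogPolyExpansion f)
    (hg : HasLogPolyExpansion g) : HasLogPolyExpansion fun x => f x - g x :=
  (hf.add (hg.const_mul (-1))).congr fun x _ => by ring

lemma HasLogPolyExpansion.sum {ι : Type*} {f : ι → ℝ → ℝ} (s : Finset ι)
    (h : ∀ i ∈ s, HasLogPolyExpansion (f i)) :
    HasLogPolyExpansion fun x => ∑ i ∈ s, f i x := by
  classical
  induction s using Finset.induction_on with
  | empty => simpa using hasLogPolyExpansion_const 0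
  | insert a s ha ih =>
    refine ((h a (by simp)).add (ih fun i hi => h i (by simp [hi]))).congr fun x _ => ?_
    rw [Finset.sum_insert ha]

lemma HasLogPolyExpansion.comp_sqrt {f : ℝ → ℝ} (hf : HasLogPolyExpansion f) :
    HasLogPolyExpansion fun x => f (Real.sqrt x) := by
  obtain ⟨Q, δ, hδ, hQ⟩ := hf
  obtain ⟨c, hc⟩ := isBigO_principal.1 hQ
  refine ⟨Q.comp (Polynomial.C (1 / 2) * Polynomial.X), δ / 2, half_pos hδ,
    isBigO_principal.2 ⟨c, fun x hx => ?_⟩⟩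
  have hx : (1:ℝ) ≤ x := hx
  have h := hc (Real.sqrt x) (Real.one_le_sqrt.2 hx)
  rw [Real.log_sqrt (by linarith), Real.sqrt_eq_rpow, ← Real.rpow_mul (by linarith)] at h
  simp only [Real.sqrt_eq_rpow, Polynomial.eval_comp, Polynomial.eval_mul, Polynomial.eval_C, Polynomial.eval_X]
  convert h using 3 <;> ring_nf

lemma Polynomial.exists_derivative_eq (Q : Polynomial ℝ) :
    ∃ R : Polynomial ℝ, Polynomial.derivative R = Q := by
  induction Q using Polynomial.induction_on' with
  | add p q hp hq =>
    obtain ⟨R, rfl⟩ := hp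
    obtain ⟨S, rfl⟩ := hq
    exact ⟨R + S, by simp⟩
  | monomial n a =>
    refine ⟨Polynomial.monomial (n + 1) (a / (n + 1)), ?_⟩
    rw [Polynomial.derivative_monomial]
    congr 1
    push_cast
    field_simp

lemma integral_eval_log_div {Q R : Polynomial ℝ} (h : Polynomial.derivative R = Q) {x : ℝ}
    (hx : 1 ≤ x) :
    IntegrableOn (fun t => Q.eval (Real.log t) / t) (Set.Ioc 1 x) ∧
    ∫ t in Set.Ioc 1 x, Q.eval (Real.log t) / t = R.eval (Real.log x) - R.eval 0 := by
  have hcont : ContinuousOn (fun t => Q.eval (Real.log t) / t) (Set.Icc 1 x) := by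
    refine ContinuousOn.div (Q.continuous.comp_continuousOn (Real.continuousOn_log.mono ?_))
      continuousOn_id ?_
    · intro t ht; have := ht.1; simp; linarith
    · intro t ht; have := ht.1; simp; linarith
  have hi : IntegrableOn (fun t => Q.eval (Real.log t) / t) (Set.Ioc 1 x) :=
    (hcont.integrableOn_Icc).mono_set Set.Ioc_subset_Icc_self
  refine ⟨hi, ?_⟩
  rw [← intervalIntegral.integral_of_le hx,
    intervalIntegral.integral_eq_sub_of_hasDerivAt (f := fun t => R.eval (Real.log t))]
  · simp
  · intro t ht
    rw [Set.uIcc_of_le hx] at ht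
    have ht0 : t ≠ 0 := by have := ht.1; linarith
    have := (R.hasDerivAt (Real.log t)).comp t (Real.hasDerivAt_log ht0)
    rw [h] at this
    rw [div_eq_mul_inv]
    exact this
  · rw [intervalIntegrable_iff_integrableOn_Ioc_of_le hx]
    exact hi

lemma HasLogPolyExpansion.integral {g : ℝ → ℝ} (hm : Measurable g) (hg : HasLogPolyExpansion g) :
    (∀ x, 1 ≤ x → IntegrableOn (fun t => g t / t) (Set.Ioc 1 x)) ∧
    HasLogPolyExpansion fun x => ∫ t in Set.Ioc 1 x, g t / t := by
  obtain ⟨Q, δ, hδ, hQ⟩ := hg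
  obtain ⟨R, hR⟩ := Q.exists_derivative_eq
  obtain ⟨c, hc⟩ := isBigO_principal.1 hQ
  set E : ℝ → ℝ := fun t => (g t - Q.eval (Real.log t)) / t with hE
  have hEm : Measurable E := by
    have := Q.continuous.measurable
    exact (hm.sub (this.comp Real.measurable_log)).div measurable_id
  have hEb : ∀ t, 1 ≤ t → ‖E t‖ ≤ c * t ^ (-δ - 1) := by
    intro t ht
    have h := hc t ht
    rw [Real.norm_of_nonneg (by positivity : 0 ≤ t ^ (-δ))] at h
    rw [Real.rpow_sub_one (by linarith), hE]
    simp only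
    rw [norm_div, Real.norm_of_nonneg (by linarith : 0 ≤ t), mul_div_assoc']
    gcongr
  have hdom : ∀ a, 1 ≤ a → IntegrableOn (fun t => c * t ^ (-δ - 1)) (Set.Ioi a) := fun a ha =>
    (integrableOn_Ioi_rpow_of_lt (by linarith) (by linarith)).const_mul c
  have hEi : ∀ a, 1 ≤ a → IntegrableOn E (Set.Ioi a) := fun a ha =>
    Integrable.mono' (hdom a ha) hEm.aestronglyMeasurable
      ((ae_restrict_iff' measurableSet_Ioi).2 (Eventually.of_forall fun t ht =>
        hEb t (ha.trans (le_of_lt ht))))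
  have hsplit : ∀ t, g t / t = Q.eval (Real.log t) / t + E t := fun t => by
    simp only [hE]; ring
  have hEI : ∀ x, 1 ≤ x → IntegrableOn E (Set.Ioc 1 x) := fun x _ =>
    (hEi 1 le_rfl).mono_set Set.Ioc_subset_Ioi_self
  refine ⟨fun x hx => ?_, R + Polynomial.C (-R.eval 0 + ∫ t in Set.Ioi 1, E t), δ, hδ, ?_⟩
  · simp only [hsplit]
    exact (integral_eval_log_div hR hx).1.add (hEI x hx)
  · refine isBigO_principal.2 ⟨c / δ, fun x hx => ?_⟩
    have hx : (1:ℝ) ≤ x := hx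
    have h1 : ∫ t in Set.Ioi 1, E t = (∫ t in Set.Ioc 1 x, E t) + ∫ t in Set.Ioi x, E t := by
      rw [← Set.Ioc_union_Ioi_eq_Ioi hx]
      exact setIntegral_union (Set.Ioc_disjoint_Ioi le_rfl) measurableSet_Ioi (hEI x hx)
        (hEi x hx)
    have h2 : ‖∫ t in Set.Ioi x, E t‖ ≤ ∫ t in Set.Ioi x, c * t ^ (-δ - 1) :=
      norm_integral_le_of_norm_le (hdom x hx)
        ((ae_restrict_iff' measurableSet_Ioi).2 (Eventually.of_forall fun t ht =>
          hEb t (hx.trans (le_of_lt ht))))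
    rw [integral_const_mul, integral_Ioi_rpow_of_lt (by linarith) (by linarith)] at h2
    simp only [hsplit]
    rw [integral_add (integral_eval_log_div hR hx).1 (hEI x hx), (integral_eval_log_div hR hx).2,
      Polynomial.eval_add, Polynomial.eval_C, h1]
    rw [Real.norm_of_nonneg (by positivity : 0 ≤ x ^ (-δ))]
    have h3 : c * (-x ^ (-δ - 1 + 1) / (-δ - 1 + 1)) = c / δ * x ^ (-δ) := by
      rw [sub_add_cancel]; field_simp
    rw [← h3]
    refine le_trans (le_of_eq ?_) h2
    rw [← norm_neg]
    congr 1
    ring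

/-- The summatory function `∑_{1 ≤ n ≤ x} c n`. -/
noncomputable def summatory (c : ℕ → ℝ) (x : ℝ) : ℝ := ∑ n ∈ Finset.Icc 1 ⌊x⌋₊, c n

lemma measurable_summatory (c : ℕ → ℝ) : Measurable (summatory c) :=
  (measurable_from_top (f := fun N : ℕ => ∑ n ∈ Finset.Icc 1 N, c n)).comp Nat.measurable_floor

lemma sum_Icc_zero_eq_sum_Icc_one {c : ℕ → ℝ} (hc : c 0 = 0) (N : ℕ) :
    ∑ n ∈ Finset.Icc 0 N, c n = ∑ n ∈ Finset.Icc 1 N, c n := by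
  rw [Finset.Icc_eq_cons_Ioc (Nat.zero_le _), Finset.sum_cons, hc, zero_add]
  rfl

lemma summatory_mul_eq_sub_integral {c : ℕ → ℝ} (hc : c 0 = 0) {f f' : ℝ → ℝ}
    (hf : ∀ t, 1 ≤ t → HasDerivAt f (f' t) t) (hf' : ContinuousOn f' (Set.Ici 1)) (x : ℝ) :
    summatory (fun n => f n * c n) x =
      f x * summatory c x - ∫ t in Set.Ioc 1 x, f' t * summatory c t := by
  have hd : Set.EqOn (deriv f) f' (Set.Icc 1 x) := fun t ht => (hf t ht.1).deriv
  have h := sum_mul_eq_sub_integral_mul₀ (f := f) c hc x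
    (fun t ht => (hf t ht.1).differentiableAt)
    (((hf'.mono Set.Icc_subset_Ici_self).integrableOn_Icc).congr_fun hd.symm measurableSet_Icc)
  rw [sum_Icc_zero_eq_sum_Icc_one (c := fun n => f n * c n) (by simp [hc]),
    sum_Icc_zero_eq_sum_Icc_one hc] at h
  rw [summatory, h, summatory]
  congr 1
  refine setIntegral_congr_fun measurableSet_Ioc fun t ht => ?_
  simp only [hd (Set.Ioc_subset_Icc_self ht), sum_Icc_zero_eq_sum_Icc_one hc, summatory]

lemma HasLogPolyExpansion.summatory_div {c : ℕ → ℝ} (hc : c 0 = 0)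
    (h : HasLogPolyExpansion fun x => summatory c x / x) :
    HasLogPolyExpansion (summatory fun n => c n / n) := by
  have hm : Measurable fun x => summatory c x / x := (measurable_summatory c).div measurable_id
  refine (h.add (h.integral hm).2).congr fun x hx => ?_
  have key := summatory_mul_eq_sub_integral hc (f := fun t => t⁻¹) (f' := fun t => -(t ^ 2)⁻¹)
    (fun t ht => hasDerivAt_inv (by linarith))
    (ContinuousOn.neg (ContinuousOn.inv₀ (by fun_prop) fun t ht => by
      have ht : (1:ℝ) ≤ t := ht
      positivity)) x
  have e : (fun n : ℕ => c n / (n : ℝ)) = fun n : ℕ => (n : ℝ)⁻¹ * c n := by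
    ext n; ring
  rw [e, key, sub_eq_add_neg, ← integral_neg]
  congr 1
  · ring
  · refine integral_congr_ae (Eventually.of_forall fun t => ?_)
    simp only
    rw [div_div, ← pow_two]
    ring

lemma HasLogPolyExpansion.summatory_log_pow_mul {c : ℕ → ℝ} (hc : c 0 = 0)
    (h : HasLogPolyExpansion (summatory c)) (j : ℕ) :
    HasLogPolyExpansion (summatory fun n => Real.log n ^ j * c n) := by
  cases j with
  | zero => simpa using h
  | succ j =>
    have hm : Measurable fun t => (j + 1 : ℝ) * (Real.log t ^ j * summatory c t) :=
      ((Real.measurable_log.pow_const j).mul (measurable_summatory c)).const_mul _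
    have h1 := (((hasLogPolyExpansion_log_pow j).mul h).const_mul (j + 1 : ℝ)).integral hm
    refine (((hasLogPolyExpansion_log_pow (j + 1)).mul h).sub h1.2).congr fun x hx => ?_
    have key := summatory_mul_eq_sub_integral hc (f := fun t => Real.log t ^ (j + 1))
      (f' := fun t => (j + 1 : ℝ) * Real.log t ^ j * t⁻¹)
      (fun t ht => by
        have := (Real.hasDerivAt_log (by linarith : t ≠ 0)).pow (j + 1)
        rw [Nat.add_sub_cancel, Nat.cast_add_one] at this
        exact this)
      (by
        have hne : ∀ t ∈ Set.Ici (1:ℝ), t ≠ 0 := fun t ht => by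
          have ht : (1:ℝ) ≤ t := ht
          positivity
        exact (continuousOn_const.mul ((Real.continuousOn_log.mono hne).pow j)).mul
          (continuousOn_id.inv₀ hne)) x
    rw [key]
    congr 1
    refine integral_congr_ae (Eventually.of_forall fun t => ?_)
    simp only
    ring

lemma hasLogPolyExpansion_floor_div : HasLogPolyExpansion fun x => (⌊x⌋₊ : ℝ) / x := by
  refine ⟨1, 1, one_pos, isBigO_principal.2 ⟨1, fun x hx => ?_⟩⟩
  have hx : (1:ℝ) ≤ x := hx
  have h0 : 0 < x := by linarith
  have h1 := Nat.floor_le h0.le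
  have h2 := Nat.lt_floor_add_one x
  rw [Real.norm_eq_abs, Polynomial.eval_one, div_sub_one h0.ne', abs_div, one_mul, Real.rpow_neg_one,
    norm_inv, Real.norm_of_nonneg h0.le, abs_of_pos h0, div_eq_mul_inv]
  refine mul_le_of_le_one_left (by positivity) ?_
  rw [abs_le]; constructor <;> linarith

lemma hasLogPolyExpansion_sum_log_pow_div (j : ℕ) :
    HasLogPolyExpansion (summatory fun n => Real.log n ^ j / n) := by
  have h0 : HasLogPolyExpansion (summatory fun n => (if n = 0 then (0:ℝ) else 1) / n) := by
    refine HasLogPolyExpansion.summatory_div (by simp)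
      (hasLogPolyExpansion_floor_div.congr fun x hx => ?_)
    congr 1
    rw [summatory, Finset.sum_congr rfl fun n hn => if_neg (by
      have := (Finset.mem_Icc.1 hn).1; omega)]
    simp
  refine (h0.summatory_log_pow_mul (by simp) j).congr fun x hx => ?_
  refine Finset.sum_congr rfl fun n hn => ?_
  simp only
  rw [if_neg (by have := (Finset.mem_Icc.1 hn).1; omega)]
  ring

lemma filter_Icc_mul_le {N m : ℕ} (hm : 1 ≤ m) :
    (Finset.Icc 1 N).filter (fun n => n * m ≤ N) = Finset.Icc 1 (N / m) := by
  ext n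
  simp only [Finset.mem_filter, Finset.mem_Icc, Nat.le_div_iff_mul_le hm]
  constructor
  · rintro ⟨⟨h1, _⟩, h2⟩
    exact ⟨h1, h2⟩
  · rintro ⟨h1, h2⟩
    exact ⟨⟨h1, le_trans (Nat.le_mul_of_pos_right n hm) h2⟩, h2⟩

lemma dirichlet_hyperbola (d : ℕ → ℝ) {N r : ℕ} (h1 : r * r ≤ N) (h2 : N < (r + 1) * (r + 1)) :
    ∑ n ∈ Finset.Icc 1 N, ∑ m ∈ Finset.Icc 1 N, (if n * m ≤ N then d n else 0) =
      ∑ m ∈ Finset.Icc 1 r, ∑ n ∈ Finset.Icc 1 (N / m), d n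
        + ∑ n ∈ Finset.Icc 1 r, d n * ((N / n : ℕ) : ℝ)
        - r * ∑ n ∈ Finset.Icc 1 r, d n := by
  have hr : r ≤ N := (Nat.le_mul_self r).trans h1
  have hf : (Finset.Icc 1 N).filter (fun n => n ≤ r) = Finset.Icc 1 r := by
    ext n
    simp only [Finset.mem_filter, Finset.mem_Icc]
    omega
  have e1 : ∑ m ∈ Finset.Icc 1 r, ∑ n ∈ Finset.Icc 1 (N / m), d n =
      ∑ n ∈ Finset.Icc 1 N, ∑ m ∈ Finset.Icc 1 N,
        (if m ≤ r then (if n * m ≤ N then d n else 0) else 0) := by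
    rw [Finset.sum_comm, ← hf, Finset.sum_filter]
    refine Finset.sum_congr rfl fun m hm => ?_
    split_ifs
    · rw [← filter_Icc_mul_le (Finset.mem_Icc.1 hm).1, Finset.sum_filter]
    · simp
  have e2 : ∑ n ∈ Finset.Icc 1 r, d n * ((N / n : ℕ) : ℝ) =
      ∑ n ∈ Finset.Icc 1 N, ∑ m ∈ Finset.Icc 1 N,
        (if n ≤ r then (if n * m ≤ N then d n else 0) else 0) := by
    rw [← hf, Finset.sum_filter]
    refine Finset.sum_congr rfl fun n hn => ?_
    split_ifs
    · simp only [mul_comm n]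
      rw [← Finset.sum_filter, filter_Icc_mul_le (Finset.mem_Icc.1 hn).1, Finset.sum_const,
        Nat.card_Icc, Nat.add_sub_cancel, nsmul_eq_mul, mul_comm]
    · simp
  have e3 : r * ∑ n ∈ Finset.Icc 1 r, d n =
      ∑ n ∈ Finset.Icc 1 N, ∑ m ∈ Finset.Icc 1 N,
        (if n ≤ r then (if m ≤ r then d n else 0) else 0) := by
    rw [Finset.mul_sum]
    conv_lhs => rw [← hf, Finset.sum_filter]
    refine Finset.sum_congr rfl fun n hn => ?_
    split_ifs
    · rw [← Finset.sum_filter, hf, Finset.sum_const, Nat.card_Icc, Nat.add_sub_cancel,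
        nsmul_eq_mul]
    · simp
  rw [e1, e2, e3, ← Finset.sum_add_distrib, ← Finset.sum_sub_distrib]
  refine Finset.sum_congr rfl fun n hn => ?_
  rw [← Finset.sum_add_distrib, ← Finset.sum_sub_distrib]
  refine Finset.sum_congr rfl fun m hm => ?_
  by_cases hn : n ≤ r <;> by_cases hm : m ≤ r
  · have : n * m ≤ N := (Nat.mul_le_mul hn hm).trans h1
    simp [hn, hm, this]
  · simp [hn, hm]
  · simp [hn, hm]
  · have : ¬ n * m ≤ N := by
      have := Nat.mul_le_mul (Nat.lt_of_not_le hn) (Nat.lt_of_not_le hm)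
      simp only [Nat.succ_eq_add_one] at this
      omega
    simp [hn, hm, this]

lemma sum_dk_succ (k N : ℕ) :
    ∑ n ∈ Finset.Icc 1 N, (dk (k + 1) n : ℝ) =
      ∑ n ∈ Finset.Icc 1 N, ∑ m ∈ Finset.Icc 1 N, (if n * m ≤ N then (dk k n : ℝ) else 0) := by
  have h := ArithmeticFunction.sum_Ioc_mul_eq_sum_prod_filter
    (ArithmeticFunction.zeta ^ k : ArithmeticFunction ℕ) ArithmeticFunction.zeta N
  rw [← pow_succ, Finset.sum_filter, Finset.sum_product] at h
  have h' := congrArg (Nat.cast : ℕ → ℝ) h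
  push_cast at h'
  refine h'.trans (Finset.sum_congr rfl fun n hn => Finset.sum_congr rfl fun m hm => ?_)
  have hm0 : m ≠ 0 := by have := (Finset.mem_Ioc.1 hm).1; omega
  simp [dk, ArithmeticFunction.zeta_apply, hm0]

lemma summatory_dk_succ (k : ℕ) {x : ℝ} (hx : 1 ≤ x) :
    summatory (fun n => (dk (k + 1) n : ℝ)) x =
      summatory (fun m => summatory (fun n => (dk k n : ℝ)) (x / m)) (Real.sqrt x)
        + summatory (fun n => (dk k n : ℝ) * ⌊x / n⌋₊) (Real.sqrt x)
        - ⌊Real.sqrt x⌋₊ * summatory (fun n => (dk k n : ℝ)) (Real.sqrt x) := by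
  have hs := Real.mul_self_sqrt (by linarith : 0 ≤ x)
  have hf1 := Nat.floor_le (Real.sqrt_nonneg x)
  have hf2 := Nat.lt_floor_add_one (Real.sqrt x)
  have h1 : ⌊Real.sqrt x⌋₊ * ⌊Real.sqrt x⌋₊ ≤ ⌊x⌋₊ := by
    rw [Nat.le_floor_iff (by linarith)]
    push_cast
    calc _ ≤ Real.sqrt x * Real.sqrt x := by gcongr
      _ = x := hs
  have h2 : ⌊x⌋₊ < (⌊Real.sqrt x⌋₊ + 1) * (⌊Real.sqrt x⌋₊ + 1) := by
    rw [Nat.floor_lt (by linarith)]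
    push_cast
    calc x = Real.sqrt x * Real.sqrt x := hs.symm
      _ < _ := by
        have : 0 < Real.sqrt x := Real.sqrt_pos.2 (by linarith)
        gcongr
  simp only [summatory, Nat.floor_div_natCast]
  rw [sum_dk_succ, dirichlet_hyperbola _ h1 h2]

lemma HasLogPolyExpansion.isBigO_rpow {g : ℝ → ℝ} (hg : HasLogPolyExpansion g) {η : ℝ}
    (hη : 0 < η) : g =O[𝓟 (Set.Ici 1)] fun x => x ^ η := by
  obtain ⟨Q, δ, hδ, hQ⟩ := hg
  refine ((hQ.trans (isBigO_rpow_of_le (by linarith : -δ ≤ η))).add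
    (isBigO_eval_log Q hη)).congr_left fun x => by ring

lemma HasLogPolyExpansion.of_le_rpow_mul {f h : ℝ → ℝ} {δ C : ℝ} (hδ : 0 < δ)
    (hh : HasLogPolyExpansion h) (hf : ∀ x, 1 ≤ x → |f x| ≤ C * (x ^ (-δ) * |h x|)) :
    HasLogPolyExpansion f := by
  refine HasLogPolyExpansion.of_isBigO (half_pos hδ) ?_
  have h1 : f =O[𝓟 (Set.Ici 1)] fun x => x ^ (-δ) * h x :=
    isBigO_principal.2 ⟨C, fun x hx => by
      have hx' : (1:ℝ) ≤ x := hx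
      rw [norm_mul, Real.norm_of_nonneg (by positivity : 0 ≤ x ^ (-δ))]
      exact hf x hx⟩
  refine (h1.trans ((isBigO_refl _ _).mul (hh.isBigO_rpow (half_pos hδ)))).trans
    ((isBigO_rpow_mul _ _).trans (isBigO_rpow_of_le (by linarith)))

lemma hasLogPolyExpansion_sum_eval_sub (Q : Polynomial ℝ) :
    HasLogPolyExpansion fun x =>
      summatory (fun m => Q.eval (Real.log x - Real.log m) / m) (Real.sqrt x) := by
  induction Q using Polynomial.induction_on' with
  | add p q hp hq =>
    refine (hp.add hq).congr fun x _ => ?_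
    simp only [summatory, Polynomial.eval_add, add_div, Finset.sum_add_distrib]
  | monomial n a =>
    have h : HasLogPolyExpansion fun x => ∑ i ∈ Finset.range (n + 1),
        (a * n.choose i * (-1) ^ (n - i)) * (Real.log x ^ i *
          summatory (fun m => Real.log m ^ (n - i) / m) (Real.sqrt x)) :=
      HasLogPolyExpansion.sum _ fun i _ => (((hasLogPolyExpansion_log_pow i).mul
        (hasLogPolyExpansion_sum_log_pow_div (n - i)).comp_sqrt).const_mul _)
    refine h.congr fun x _ => ?_
    simp only [summatory, Polynomial.eval_monomial, Finset.mul_sum]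
    rw [Finset.sum_comm]
    refine Finset.sum_congr rfl fun m _ => ?_
    rw [sub_eq_add_neg, add_pow, Finset.mul_sum, Finset.sum_div]
    refine Finset.sum_congr rfl fun i _ => ?_
    rw [neg_pow (Real.log m)]
    ring

lemma one_le_and_le_sqrt_of_mem {x : ℝ} {m : ℕ} (hm : m ∈ Finset.Icc 1 ⌊Real.sqrt x⌋₊) :
    (1:ℝ) ≤ m ∧ (m : ℝ) ≤ Real.sqrt x := by
  obtain ⟨h1, h2⟩ := Finset.mem_Icc.1 hm
  exact ⟨by exact_mod_cast h1, (Nat.le_floor_iff (Real.sqrt_nonneg x)).1 h2⟩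

lemma HasLogPolyExpansion.summatory_comp_div {g : ℝ → ℝ} (hg : HasLogPolyExpansion g) :
    HasLogPolyExpansion fun x => summatory (fun m => g (x / m) / m) (Real.sqrt x) := by
  obtain ⟨Q, δ, hδ, hQ⟩ := hg
  obtain ⟨C, hC⟩ := isBigO_principal.1 hQ
  have herr : HasLogPolyExpansion fun x => summatory
      (fun m => (g (x / m) - Q.eval (Real.log x - Real.log m)) / m) (Real.sqrt x) := by
    refine HasLogPolyExpansion.of_le_rpow_mul (C := |C|) (half_pos hδ)
      (hasLogPolyExpansion_sum_log_pow_div 0).comp_sqrt fun x hx => ?_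
    have hx0 : 0 < x := by linarith
    simp only [summatory, pow_zero]
    rw [abs_of_nonneg (Finset.sum_nonneg fun m _ => by positivity :
      (0:ℝ) ≤ ∑ m ∈ Finset.Icc 1 ⌊Real.sqrt x⌋₊, 1 / (m : ℝ)), Finset.mul_sum,
      Finset.mul_sum]
    refine (Finset.abs_sum_le_sum_abs _ _).trans (Finset.sum_le_sum fun m hm => ?_)
    obtain ⟨hm1, hm2⟩ := one_le_and_le_sqrt_of_mem hm
    have hm0 : (0:ℝ) < m := by linarith
    have hs0 : 0 < Real.sqrt x := Real.sqrt_pos.2 hx0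
    have hle : Real.sqrt x ≤ x / m := by
      rw [le_div_iff₀ hm0]
      calc Real.sqrt x * m ≤ Real.sqrt x * Real.sqrt x := by gcongr
        _ = x := Real.mul_self_sqrt hx0.le
    have h1 : 1 ≤ x / m := (Real.one_le_sqrt.2 hx).trans hle
    have h := hC (x / m) h1
    rw [Real.log_div hx0.ne' hm0.ne', Real.norm_eq_abs,
      Real.norm_of_nonneg (by positivity : 0 ≤ (x / m) ^ (-δ))] at h
    have h2 : (x / m) ^ (-δ) ≤ x ^ (-(δ / 2)) := by
      calc (x / m) ^ (-δ) ≤ Real.sqrt x ^ (-δ) :=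
            Real.rpow_le_rpow_of_nonpos hs0 hle (by linarith)
        _ = x ^ (-(δ / 2)) := by
            rw [Real.sqrt_eq_rpow, ← Real.rpow_mul hx0.le]
            congr 1; ring
    rw [abs_div, abs_of_pos hm0, ← mul_assoc, mul_one_div]
    gcongr
    calc _ ≤ C * (x / m) ^ (-δ) := h
      _ ≤ |C| * (x / m) ^ (-δ) := by gcongr; exact le_abs_self C
      _ ≤ _ := by gcongr
  refine ((hasLogPolyExpansion_sum_eval_sub Q).add herr).congr fun x _ => ?_
  simp only [summatory]
  rw [← Finset.sum_add_distrib]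
  refine Finset.sum_congr rfl fun m _ => ?_
  ring

lemma hasLogPolyExpansion_summatory_mul_floor_div {c : ℕ → ℝ} (hc0 : c 0 = 0)
    (hc : ∀ n, 0 ≤ c n) (h : HasLogPolyExpansion fun x => summatory c x / x) :
    HasLogPolyExpansion fun x =>
      summatory (fun n => c n * ⌊x / n⌋₊) (Real.sqrt x) / x := by
  have herr : HasLogPolyExpansion fun x =>
      summatory (fun n => c n * ⌊x / n⌋₊) (Real.sqrt x) / x -
        summatory (fun n => c n / n) (Real.sqrt x) := by
    refine HasLogPolyExpansion.of_le_rpow_mul (C := 1) (half_pos one_pos) h.comp_sqrt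
      fun x hx => ?_
    have hx0 : 0 < x := by linarith
    have hs0 : 0 < Real.sqrt x := Real.sqrt_pos.2 hx0
    have e : x ^ (-(1 / 2 : ℝ)) * |summatory c (Real.sqrt x) / Real.sqrt x| =
        summatory c (Real.sqrt x) / x := by
      have h0 : 0 ≤ summatory c (Real.sqrt x) := Finset.sum_nonneg fun n _ => hc n
      rw [abs_of_nonneg (div_nonneg h0 hs0.le), Real.rpow_neg hx0.le,
        ← Real.sqrt_eq_rpow, inv_mul_eq_div, div_div, Real.mul_self_sqrt hx0.le]
    rw [e, one_mul]
    simp only [summatory]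
    rw [Finset.sum_div, Finset.sum_div, ← Finset.sum_sub_distrib]
    refine (Finset.abs_sum_le_sum_abs _ _).trans (Finset.sum_le_sum fun n hn => ?_)
    obtain ⟨hn1, hn2⟩ := one_le_and_le_sqrt_of_mem hn
    have hn0 : (0:ℝ) < n := by linarith
    have e2 : c n * ⌊x / n⌋₊ / x - c n / n = c n / x * (⌊x / n⌋₊ - x / n) := by
      field_simp
    rw [e2, abs_mul, abs_of_nonneg (div_nonneg (hc n) hx0.le)]
    refine mul_le_of_le_one_right (div_nonneg (hc n) hx0.le) ?_
    have h1 := Nat.floor_le (by positivity : 0 ≤ x / n)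
    have h2 := Nat.lt_floor_add_one (x / n)
    rw [abs_le]
    constructor <;> linarith
  exact (herr.add (h.summatory_div hc0).comp_sqrt).congr fun x _ => by ring

lemma dk_zero_right (k : ℕ) : dk k 0 = 0 := by simp [dk]

/-- The divisor sums `∑_{n ≤ x} d_k(n)` are `x` times a polynomial in `log x`, up to a
power-saving error. -/
theorem hasLogPolyExpansion_summatory_dk (k : ℕ) :
    HasLogPolyExpansion fun x => summatory (fun n => (dk k n : ℝ)) x / x := by
  induction k with
  | zero =>
    refine HasLogPolyExpansion.of_isBigO one_pos (isBigO_principal.2 ⟨1, fun x hx => ?_⟩)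
    have hx : (1:ℝ) ≤ x := hx
    have e : summatory (fun n => (dk 0 n : ℝ)) x = 1 := by
      have h1 : 1 ≤ ⌊x⌋₊ := (Nat.one_le_floor_iff x).2 hx
      rw [summatory, Finset.sum_eq_single_of_mem 1 (by simp [h1])]
      · simp [dk]
      · intro n _ hn
        simp [dk, ArithmeticFunction.one_apply_ne hn]
    simp only [e]
    rw [Real.rpow_neg_one, one_div, one_mul]
  | succ k ih =>
    have hc0 : ((dk k 0 : ℕ) : ℝ) = 0 := by simp [dk_zero_right]
    have h1 := ih.summatory_comp_div
    have h2 := hasLogPolyExpansion_summatory_mul_floor_div (c := fun n => (dk k n : ℝ)) hc0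
      (fun n => Nat.cast_nonneg _) ih
    have h3 := (hasLogPolyExpansion_floor_div.mul ih).comp_sqrt
    refine ((h1.add h2).sub h3).congr fun x hx => ?_
    have hx0 : 0 < x := by linarith
    rw [summatory_dk_succ k hx, sub_div, add_div, div_mul_div_comm, Real.mul_self_sqrt hx0.le]
    congr 2
    simp only [summatory]
    rw [Finset.sum_div]
    refine Finset.sum_congr rfl fun m hm => ?_
    have hm0 : (0:ℝ) < m := by linarith [(one_le_and_le_sqrt_of_mem hm).1]
    field_simp

lemma Real.exp_image_Ioi_zero : Real.exp '' Set.Ioi 0 = Set.Ioi 1 := by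
  ext r
  constructor
  · rintro ⟨u, hu, rfl⟩
    exact Real.one_lt_exp_iff.2 hu
  · intro hr
    have hr : (1:ℝ) < r := hr
    exact ⟨Real.log r, Real.log_pos hr, Real.exp_log (by linarith)⟩

lemma integral_Ioi_one_eq_integral_exp (g : ℝ → ℝ) :
    ∫ r in Set.Ioi 1, g r = ∫ u in Set.Ioi 0, Real.exp u * g (Real.exp u) := by
  rw [← Real.exp_image_Ioi_zero, integral_image_eq_integral_abs_deriv_smul measurableSet_Ioi
    (fun u _ => (Real.hasDerivAt_exp u).hasDerivWithinAt) Real.exp_injective.injOn]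
  simp

lemma integrableOn_Ioi_one_iff_exp (g : ℝ → ℝ) :
    IntegrableOn g (Set.Ioi 1) ↔
      IntegrableOn (fun u => Real.exp u * g (Real.exp u)) (Set.Ioi 0) := by
  rw [← Real.exp_image_Ioi_zero, integrableOn_image_iff_integrableOn_abs_deriv_smul
    measurableSet_Ioi (fun u _ => (Real.hasDerivAt_exp u).hasDerivWithinAt)
    Real.exp_injective.injOn]
  simp

lemma LSeriesHasSum_dk (k : ℕ) {s : ℂ} (hs : 1 < s.re) :
    LSeriesHasSum (fun n => (dk k n : ℂ)) s (riemannZeta s ^ k) := by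
  have h : LSeriesHasSum (fun n => (((ArithmeticFunction.zeta ^ k : ArithmeticFunction ℕ) :
      ArithmeticFunction ℂ) n)) s (riemannZeta s ^ k) := by
    induction k with
    | zero =>
      rw [pow_zero, pow_zero, ArithmeticFunction.natCoe_one, ArithmeticFunction.one_eq_delta]
      rw [LSeriesHasSum, funext (LSeries.term_delta s)]
      exact hasSum_ite_eq 1 (1:ℂ)
    | succ k ih =>
      rw [pow_succ, pow_succ, ArithmeticFunction.natCoe_mul]
      exact ArithmeticFunction.LSeriesHasSum_mul ih
        (by simpa using ArithmeticFunction.LSeriesHasSum_zeta hs)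
  simpa [dk] using h

lemma summatory_dk_isBigO (k : ℕ) {η : ℝ} (hη : 0 < η) :
    (fun x => summatory (fun n => (dk k n : ℝ)) x) =O[𝓟 (Set.Ici 1)] fun x => x ^ (1 + η) := by
  have h := (hasLogPolyExpansion_summatory_dk k).isBigO_rpow hη
  have h1 : (fun x : ℝ => x) =O[𝓟 (Set.Ici 1)] fun x : ℝ => x ^ (1:ℝ) := by
    simpa using isBigO_refl (fun x : ℝ => x) _
  refine ((h1.mul h).trans (isBigO_rpow_mul 1 η)).congr' ?_ EventuallyEq.rfl
  refine eventually_principal.2 fun x hx => ?_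
  have hx : (1:ℝ) ≤ x := hx
  field_simp

lemma riemannZeta_pow_eq_integral (k : ℕ) {w : ℝ} (hw : 0 < w) :
    riemannZeta (1 + w) ^ k = (((1 + w) * ∫ u in Set.Ioi (0:ℝ),
      summatory (fun n => (dk k n : ℝ)) (Real.exp u) / Real.exp u * Real.exp (-(w * u)) : ℝ) : ℂ) := by
  have hO : (fun n : ℕ => ∑ m ∈ Finset.Icc 1 n, (dk k m : ℝ)) =O[atTop]
      fun n : ℕ => (n : ℝ) ^ (1 + w / 2) := by
    have h := (summatory_dk_isBigO k (half_pos hw)).comp_tendsto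
      (show Tendsto (Nat.cast : ℕ → ℝ) atTop (𝓟 (Set.Ici 1)) from
        tendsto_principal.2 (by
          filter_upwards [eventually_ge_atTop 1] with n hn
          simpa using hn))
    simpa [summatory, Function.comp_def] using h
  have hre : ((1 + w : ℂ)).re = 1 + w := by simp
  have h1 := LSeries_eq_mul_integral_of_nonneg (fun n => (dk k n : ℝ))
    (by linarith : 0 ≤ 1 + w / 2) (s := 1 + w) (by rw [hre]; linarith) hO
    (fun n => Nat.cast_nonneg _)
  simp only [Complex.ofReal_natCast] at h1
  rw [(LSeriesHasSum_dk k (by rw [hre]; linarith)).LSeries_eq] at h1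
  rw [h1, Complex.ofReal_mul]
  congr 1
  · push_cast; rfl
  have e : ∫ t in Set.Ioi (1:ℝ), (∑ n ∈ Finset.Icc 1 ⌊t⌋₊, (dk k n : ℂ)) *
      (t : ℂ) ^ (-(1 + w + 1) : ℂ) =
      ((∫ t in Set.Ioi (1:ℝ), summatory (fun n => (dk k n : ℝ)) t * t ^ (-(1 + w + 1)) : ℝ) : ℂ) := by
    rw [← integral_complex_ofReal]
    refine setIntegral_congr_fun measurableSet_Ioi fun t ht => ?_
    have ht : (1:ℝ) < t := ht
    simp only [summatory]
    push_cast
    rw [Complex.ofReal_cpow (by linarith)]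
    push_cast
    rfl
  rw [e, integral_Ioi_one_eq_integral_exp]
  congr 1
  refine integral_congr_ae (Eventually.of_forall fun u => ?_)
  simp only
  have e2 : Real.exp u ^ (-(1 + w + 1)) = Real.exp (-(w * u)) / (Real.exp u * Real.exp u) := by
    rw [← Real.exp_mul, ← Real.exp_add, ← Real.exp_sub]
    congr 1; ring
  rw [e2]
  have := Real.exp_pos u
  field_simp

lemma analyticAt_zetaPowAux (k : ℕ) : AnalyticAt ℂ (zetaPowAux k) 1 := by
  refine Complex.analyticAt_of_differentiable_on_punctured_nhds_of_continuousAt ?_ ?_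
  · filter_upwards [self_mem_nhdsWithin] with z hz
    have hz : z ≠ 1 := hz
    have hd : DifferentiableAt ℂ (fun s : ℂ => ((s - 1) * riemannZeta s) ^ k) z :=
      ((differentiableAt_id.sub_const 1).mul (differentiableAt_riemannZeta hz)).pow k
    refine hd.congr_of_eventuallyEq ?_
    filter_upwards [isOpen_ne.mem_nhds hz] with s hs
    exact Function.update_of_ne hs _ _
  · rw [zetaPowAux, continuousAt_update_same]
    simpa using riemannZeta_residue_one.pow k

lemma exists_abs_re_zetaPowAux_sub_le (k : ℕ) : ∃ C : ℝ, ∀ᶠ w : ℝ in 𝓝[>] 0,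
    |(zetaPowAux k (1 + w)).re - ∑ i ∈ Finset.range k, lam k i / i.factorial * w ^ i|
      ≤ C * w ^ k := by
  have h := (analyticAt_zetaPowAux k).hasFPowerSeriesAt.isBigO_sub_partialSum_pow k
  have ht : Tendsto (fun w : ℝ => (w : ℂ)) (𝓝[>] 0) (𝓝 0) :=
    (by simpa using Complex.continuous_ofReal.tendsto 0 :
      Tendsto (fun w : ℝ => (w : ℂ)) (𝓝 0) (𝓝 0)).mono_left nhdsWithin_le_nhds
  obtain ⟨C, hC⟩ := (h.comp_tendsto ht).bound
  refine ⟨C, ?_⟩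
  filter_upwards [hC, self_mem_nhdsWithin] with w hw hw0
  have hw0 : 0 < w := hw0
  simp only [Function.comp_apply] at hw
  have e : (zetaPowAux k (1 + w)).re - ∑ i ∈ Finset.range k, lam k i / i.factorial * w ^ i =
      (zetaPowAux k (1 + w) - (FormalMultilinearSeries.ofScalars ℂ fun n =>
        iteratedDeriv n (zetaPowAux k) 1 / (n.factorial : ℂ)).partialSum k w).re := by
    rw [Complex.sub_re, FormalMultilinearSeries.partialSum, Complex.re_sum]
    congr 1
    refine Finset.sum_congr rfl fun i _ => ?_
    rw [FormalMultilinearSeries.ofScalars_apply_eq, smul_eq_mul, ← Complex.ofReal_pow,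
      Complex.re_mul_ofReal, Complex.div_natCast_re, lam]
  rw [e]
  refine (Complex.abs_re_le_norm _).trans (hw.trans (le_of_eq ?_))
  simp [abs_of_pos hw0]

lemma one_add_mul_sum_alternating (l : ℕ → ℝ) (w : ℝ) (K : ℕ) :
    (1 + w) * ∑ n ∈ Finset.range (K + 1),
        ((-1) ^ n * ∑ i ∈ Finset.range (n + 1), (-1) ^ i * l i) * w ^ n =
      ∑ i ∈ Finset.range (K + 1), l i * w ^ i
        + ((-1) ^ K * ∑ i ∈ Finset.range (K + 1), (-1) ^ i * l i) * w ^ (K + 1) := by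
  induction K with
  | zero => simp; ring
  | succ K ih =>
    rw [Finset.sum_range_succ, mul_add, ih, Finset.sum_range_succ _ (K + 1),
      Finset.sum_range_succ _ (K + 1)]
    have h1 : (-1 : ℝ) ^ (K + 1) * (-1) ^ (K + 1) = 1 := by
      rw [← mul_pow]; simp
    linear_combination (l (K + 1) * w ^ (K + 1)) * h1

lemma exists_laplace_polynomial (P : Polynomial ℝ) :
    ∃ L : Polynomial ℝ, L.coeff 0 = 0 ∧ (∀ j, L.coeff (j + 1) = P.coeff j * j.factorial) ∧
      ∀ w : ℝ, 0 < w →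
        IntegrableOn (fun u => P.eval u * Real.exp (-(w * u))) (Set.Ioi 0) ∧
        ∫ u in Set.Ioi 0, P.eval u * Real.exp (-(w * u)) = L.eval w⁻¹ := by
  induction P using Polynomial.induction_on' with
  | add p q hp hq =>
    obtain ⟨L, h0, hL, hi⟩ := hp
    obtain ⟨L', h0', hL', hi'⟩ := hq
    refine ⟨L + L', by simp [h0, h0'], fun j => by simp [hL, hL', add_mul], fun w hw => ?_⟩
    simp only [Polynomial.eval_add, add_mul]
    refine ⟨(hi w hw).1.add (hi' w hw).1, ?_⟩
    rw [integral_add (hi w hw).1 (hi' w hw).1, (hi w hw).2, (hi' w hw).2]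
  | monomial n a =>
    refine ⟨Polynomial.monomial (n + 1) (a * n.factorial), by simp [Polynomial.coeff_monomial],
      fun j => ?_, fun w hw => ?_⟩
    · simp only [Polynomial.coeff_monomial, add_left_inj]
      split_ifs with h
      · rw [h]
      · simp
    · simp only [Polynomial.eval_monomial, mul_assoc]
      refine ⟨(integrableOn_pow_mul_exp_neg_mul hw n).const_mul a, ?_⟩
      rw [integral_const_mul, integral_pow_mul_exp_neg_mul hw n, inv_pow, div_eq_mul_inv]

/-- The polynomial `P_k` of the main term in the Piltz divisor problem. -/
noncomputable def piltzPolynomial (k : ℕ) : Polynomial ℝ :=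
  ∑ j ∈ Finset.range k, Polynomial.monomial j (aCoef k j / j.factorial)

lemma integral_piltzPolynomial_mul_exp {k : ℕ} (hk : 0 < k) {w : ℝ} (hw : 0 < w) :
    (1 + w) * (w ^ k * ∫ u in Set.Ioi 0, (piltzPolynomial k).eval u * Real.exp (-(w * u))) =
      ∑ i ∈ Finset.range k, lam k i / i.factorial * w ^ i + aCoef k 0 * w ^ k := by
  obtain ⟨K, rfl⟩ : ∃ K, k = K + 1 := ⟨k - 1, by omega⟩
  have h1 : ∫ u in Set.Ioi 0, (piltzPolynomial (K + 1)).eval u * Real.exp (-(w * u)) =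
      ∑ j ∈ Finset.range (K + 1), aCoef (K + 1) j / w ^ (j + 1) := by
    have e : ∀ u, (piltzPolynomial (K + 1)).eval u * Real.exp (-(w * u)) =
        ∑ j ∈ Finset.range (K + 1),
          aCoef (K + 1) j / j.factorial * (u ^ j * Real.exp (-(w * u))) := by
      intro u
      rw [piltzPolynomial, Polynomial.eval_finsetSum, Finset.sum_mul]
      refine Finset.sum_congr rfl fun j _ => ?_
      rw [Polynomial.eval_monomial]; ring
    simp only [e]
    rw [integral_finsetSum _ fun j _ => (integrableOn_pow_mul_exp_neg_mul hw j).const_mul _]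
    refine Finset.sum_congr rfl fun j _ => ?_
    rw [integral_const_mul, integral_pow_mul_exp_neg_mul hw j]
    have : (j.factorial : ℝ) ≠ 0 := by positivity
    field_simp
  have h2 : w ^ (K + 1) * ∑ j ∈ Finset.range (K + 1), aCoef (K + 1) j / w ^ (j + 1) =
      ∑ n ∈ Finset.range (K + 1), ((-1) ^ n * ∑ i ∈ Finset.range (n + 1),
        (-1) ^ i * (lam (K + 1) i / i.factorial)) * w ^ n := by
    rw [← Finset.sum_range_reflect, Finset.mul_sum]
    refine Finset.sum_congr rfl fun n hn => ?_
    have hn : n ≤ K := Nat.lt_succ_iff.1 (Finset.mem_range.1 hn)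
    have e : w ^ (K + 1) = w ^ n * w ^ (K + 1 - 1 - n + 1) := by
      rw [← pow_add]; congr 1; omega
    have e2 : K + 1 - 1 - (K + 1 - 1 - n) = n := by omega
    rw [e, aCoef, e2]
    simp only [mul_div_assoc]
    field_simp
  rw [h1, h2, one_add_mul_sum_alternating]
  congr 2
  rw [aCoef]
  simp only [mul_div_assoc, Nat.add_sub_cancel, Nat.sub_zero]

lemma exists_abs_integral_summatory_sub_le (k : ℕ) {Q : Polynomial ℝ} {δ : ℝ} (hδ : 0 < δ)
    (hQ : (fun x => summatory (fun n => (dk k n : ℝ)) x / x - Q.eval (Real.log x))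
      =O[𝓟 (Set.Ici 1)] fun x => x ^ (-δ)) :
    ∃ B : ℝ, ∀ w : ℝ, 0 < w →
      |(∫ u in Set.Ioi 0, summatory (fun n => (dk k n : ℝ)) (Real.exp u) / Real.exp u *
        Real.exp (-(w * u))) - ∫ u in Set.Ioi 0, Q.eval u * Real.exp (-(w * u))| ≤ B := by
  obtain ⟨C, hC⟩ := isBigO_principal.1 hQ
  set G : ℝ → ℝ := fun u => summatory (fun n => (dk k n : ℝ)) (Real.exp u) / Real.exp u with hG
  have hGm : Measurable G :=
    ((measurable_summatory _).comp Real.measurable_exp).div Real.measurable_exp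
  have hQm : Measurable fun u => Q.eval u := Q.continuous.measurable
  have hdom : IntegrableOn (fun u => C * Real.exp (-(δ * u))) (Set.Ioi 0) := by
    simpa [IntegrableOn] using (integrableOn_pow_mul_exp_neg_mul hδ 0).const_mul C
  refine ⟨∫ u in Set.Ioi 0, C * Real.exp (-(δ * u)), fun w hw => ?_⟩
  have hbd : ∀ u ∈ Set.Ioi (0:ℝ),
      ‖(G u - Q.eval u) * Real.exp (-(w * u))‖ ≤ C * Real.exp (-(δ * u)) := by
    intro u hu
    have hu : 0 < u := hu
    have h := hC (Real.exp u) (Real.one_le_exp hu.le)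
    rw [Real.log_exp, Real.norm_of_nonneg (by positivity : 0 ≤ Real.exp u ^ (-δ)),
      ← Real.exp_mul, mul_neg, mul_comm u] at h
    rw [norm_mul, Real.norm_of_nonneg (Real.exp_pos _).le]
    refine (mul_le_of_le_one_right (norm_nonneg _) ?_).trans h
    rw [Real.exp_le_one_iff]
    have : 0 < w * u := by positivity
    linarith
  have hbd' : ∀ᵐ u ∂(volume.restrict (Set.Ioi (0:ℝ))),
      ‖(G u - Q.eval u) * Real.exp (-(w * u))‖ ≤ C * Real.exp (-(δ * u)) :=
    (ae_restrict_iff' measurableSet_Ioi).2 (Eventually.of_forall hbd)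
  have hei : IntegrableOn (fun u => (G u - Q.eval u) * Real.exp (-(w * u))) (Set.Ioi 0) :=
    Integrable.mono' hdom
      ((hGm.sub hQm).mul (by fun_prop)).aestronglyMeasurable hbd'
  obtain ⟨_, _, _, hL⟩ := exists_laplace_polynomial Q
  have hQi := (hL w hw).1
  have e : ∫ u in Set.Ioi 0, G u * Real.exp (-(w * u)) =
      (∫ u in Set.Ioi 0, Q.eval u * Real.exp (-(w * u))) +
        ∫ u in Set.Ioi 0, (G u - Q.eval u) * Real.exp (-(w * u)) := by
    rw [← integral_add hQi hei]
    refine integral_congr_ae (Eventually.of_forall fun u => ?_)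
    simp only
    ring
  rw [e, add_sub_cancel_left, ← Real.norm_eq_abs]
  exact norm_integral_le_of_norm_le hdom hbd'

lemma exists_abs_integral_summatory_sub_piltz_le {k : ℕ} (hk : 0 < k) :
    ∃ B : ℝ, ∀ᶠ w : ℝ in 𝓝[>] 0,
      |(∫ u in Set.Ioi 0, summatory (fun n => (dk k n : ℝ)) (Real.exp u) / Real.exp u *
        Real.exp (-(w * u))) -
          ∫ u in Set.Ioi 0, (piltzPolynomial k).eval u * Real.exp (-(w * u))| ≤ B := by
  obtain ⟨C, hC⟩ := exists_abs_re_zetaPowAux_sub_le k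
  refine ⟨C + |aCoef k 0|, ?_⟩
  filter_upwards [hC, self_mem_nhdsWithin] with w hw hw0
  have hw0 : 0 < w := hw0
  set F := ∫ u in Set.Ioi 0, summatory (fun n => (dk k n : ℝ)) (Real.exp u) / Real.exp u *
    Real.exp (-(w * u)) with hF
  set I := ∫ u in Set.Ioi 0, (piltzPolynomial k).eval u * Real.exp (-(w * u)) with hI
  have hZ : (zetaPowAux k (1 + w)).re = w ^ k * ((1 + w) * F) := by
    have hne : (1 + w : ℂ) ≠ 1 := by simpa using hw0.ne'
    rw [zetaPowAux, Function.update_of_ne hne, add_sub_cancel_left, mul_pow,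
      riemannZeta_pow_eq_integral k hw0, ← hF, ← Complex.ofReal_pow, ← Complex.ofReal_mul,
      Complex.ofReal_re]
  have hP := integral_piltzPolynomial_mul_exp hk hw0
  rw [← hI] at hP
  have e : w ^ k * ((1 + w) * (F - I)) =
      (w ^ k * ((1 + w) * F) - ∑ i ∈ Finset.range k, lam k i / i.factorial * w ^ i)
        - aCoef k 0 * w ^ k := by
    linear_combination -hP
  have hwk : 0 < w ^ k := by positivity
  have h1 : w ^ k * ((1 + w) * |F - I|) ≤ w ^ k * (C + |aCoef k 0|) := by
    calc w ^ k * ((1 + w) * |F - I|) = |w ^ k * ((1 + w) * (F - I))| := by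
          rw [abs_mul, abs_mul, abs_of_pos hwk, abs_of_pos (by linarith : 0 < 1 + w)]
      _ ≤ C * w ^ k + |aCoef k 0 * w ^ k| := by
          rw [e, ← hZ]
          exact (abs_sub _ _).trans (by gcongr)
      _ = _ := by rw [abs_mul, abs_of_pos hwk]; ring
  have h2 := le_of_mul_le_mul_left h1 hwk
  have h3 : 0 ≤ w * |F - I| := by positivity
  linarith

lemma eq_piltzPolynomial {k : ℕ} (hk : 0 < k) {Q : Polynomial ℝ} {δ : ℝ} (hδ : 0 < δ)
    (hQ : (fun x => summatory (fun n => (dk k n : ℝ)) x / x - Q.eval (Real.log x))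
      =O[𝓟 (Set.Ici 1)] fun x => x ^ (-δ)) : Q = piltzPolynomial k := by
  obtain ⟨B, hB⟩ := exists_abs_integral_summatory_sub_le k hδ hQ
  obtain ⟨B', hB'⟩ := exists_abs_integral_summatory_sub_piltz_le hk
  obtain ⟨L, hL0, hL, hLi⟩ := exists_laplace_polynomial (Q - piltzPolynomial k)
  obtain ⟨_, _, _, hQi⟩ := exists_laplace_polynomial Q
  obtain ⟨_, _, _, hPi⟩ := exists_laplace_polynomial (piltzPolynomial k)
  have hbound : ∀ᶠ w : ℝ in 𝓝[>] 0, |L.eval w⁻¹| ≤ B + B' := by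
    filter_upwards [hB', self_mem_nhdsWithin] with w hw' hw0
    have hw := hB w hw0
    rw [← (hLi w hw0).2]
    have e : ∫ u in Set.Ioi 0, (Q - piltzPolynomial k).eval u * Real.exp (-(w * u)) =
        (∫ u in Set.Ioi 0, Q.eval u * Real.exp (-(w * u))) -
          ∫ u in Set.Ioi 0, (piltzPolynomial k).eval u * Real.exp (-(w * u)) := by
      rw [← integral_sub (hQi w hw0).1 (hPi w hw0).1]
      simp only [Polynomial.eval_sub, sub_mul]
    rw [e]
    rw [abs_le] at hw hw' ⊢
    constructor <;> linarith [hw.1, hw.2, hw'.1, hw'.2]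
  have hdeg : L.degree ≤ 0 := by
    rw [← Polynomial.isBoundedUnder_abs_atTop_iff]
    refine ⟨B + B', eventually_map.2 ?_⟩
    filter_upwards [tendsto_inv_atTop_nhdsGT_zero.eventually hbound] with x hx
    simpa using hx
  have hL' : L = 0 := by
    rw [Polynomial.eq_C_of_degree_le_zero hdeg, hL0, Polynomial.C_0]
  rw [← sub_eq_zero]
  ext j
  have h := hL j
  rw [hL', Polynomial.coeff_zero] at h
  have hj : (j.factorial : ℝ) ≠ 0 := by positivity
  simpa [hj] using h.symm

/-- A power-saving bound in the Piltz divisor problem. -/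
theorem exists_abs_Deltak_le {k : ℕ} (hk : 0 < k) :
    ∃ C δ : ℝ, 0 < δ ∧ ∀ x, 1 ≤ x → |Deltak k x| ≤ C * x ^ (-δ) * x := by
  obtain ⟨Q, δ, hδ, hQ⟩ := hasLogPolyExpansion_summatory_dk k
  have hQ' := eq_piltzPolynomial hk hδ hQ
  obtain ⟨C, hC⟩ := isBigO_principal.1 hQ
  refine ⟨C, δ, hδ, fun x hx => ?_⟩
  have hx0 : 0 < x := by linarith
  have h := hC x hx
  rw [Real.norm_eq_abs, Real.norm_of_nonneg (by positivity : 0 ≤ x ^ (-δ))] at h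
  have e : Deltak k x = (summatory (fun n => (dk k n : ℝ)) x / x - Q.eval (Real.log x)) * x := by
    rw [hQ', piltzPolynomial, Polynomial.eval_finsetSum, sub_mul, div_mul_cancel₀ _ hx0.ne', Deltak,
      mul_comm x]
    simp only [Polynomial.eval_monomial, summatory]
  rw [e, abs_mul, abs_of_pos hx0]
  gcongr

lemma measurable_Deltak (k : ℕ) : Measurable (Deltak k) := by
  refine (measurable_summatory fun n => (dk k n : ℝ)).sub (measurable_id.mul ?_)
  exact Finset.measurable_sum _ fun j _ => (Real.measurable_log.pow_const j).const_mul _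

lemma continuousAt_Deltak (k : ℕ) {x : ℝ} (hx : 0 < x) (hn : ∀ n : ℕ, (n : ℝ) ≠ x) :
    ContinuousAt (Deltak k) x := by
  have h1 : ContinuousAt (fun x : ℝ => ∑ n ∈ Finset.Icc 1 ⌊x⌋₊, (dk k n : ℝ)) x := by
    have hl : (⌊x⌋₊ : ℝ) < x := lt_of_le_of_ne (Nat.floor_le hx.le) (hn _)
    have hev : ∀ᶠ y in 𝓝 x, ⌊y⌋₊ = ⌊x⌋₊ := by
      filter_upwards [Ioo_mem_nhds hl (Nat.lt_floor_add_one x)] with y hy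
      exact (Nat.floor_eq_iff ((Nat.cast_nonneg _).trans hy.1.le)).2 ⟨hy.1.le, hy.2⟩
    refine continuousAt_const.congr (f := fun _ => ∑ n ∈ Finset.Icc 1 ⌊x⌋₊, (dk k n : ℝ)) ?_
    filter_upwards [hev] with y hy
    rw [hy]
  refine h1.sub (continuousAt_id.mul ?_)
  exact tendsto_finsetSum _ fun j _ =>
    continuousAt_const.mul ((Real.continuousAt_log hx.ne').pow j)

theorem stmt16 (k : ℕ) (hk : 0 < k) :
    IntegrableOn (fun x : ℝ => (phik k x) ^ 2) (Set.Ioi 0) ∧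
    IntegrableOn (fun r : ℝ => (Deltak k r) ^ 2 / r ^ 3) (Set.Ioi 1) ∧
    ∫ x in Set.Ioi (0 : ℝ), (phik k x) ^ 2 = ∫ r in Set.Ioi (1 : ℝ), (Deltak k r) ^ 2 / r ^ 3 := by
  obtain ⟨C, δ, hδ, hC⟩ := exists_abs_Deltak_le hk
  set f : ℝ → ℝ := fun u => Deltak k (Real.exp u) / Real.exp u with hf
  have hfm : Measurable f :=
    ((measurable_Deltak k).comp Real.measurable_exp).div Real.measurable_exp
  have hfb : ∀ u, 0 < u → |f u| ≤ C * Real.exp (-(δ * u)) := by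
    intro u hu
    have h := hC (Real.exp u) (Real.one_le_exp hu.le)
    rw [← Real.exp_mul, mul_neg, mul_comm u] at h
    rw [hf]
    simp only
    rw [abs_div, abs_of_pos (Real.exp_pos u), div_le_iff₀ (Real.exp_pos u)]
    exact h
  have hC0 : 0 ≤ C := by
    have := (abs_nonneg _).trans (hfb 1 one_pos)
    exact nonneg_of_mul_nonneg_left this (Real.exp_pos _)
  have hfM : ∀ u, 0 < u → |f u| ≤ C := fun u hu =>
    (hfb u hu).trans (mul_le_of_le_one_right hC0 (by
      rw [Real.exp_le_one_iff]
      have : 0 < δ * u := by positivity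
      linarith))
  have hfi : IntegrableOn f (Set.Ioi 0) := by
    have hdom : IntegrableOn (fun u => C * Real.exp (-(δ * u))) (Set.Ioi 0) := by
      simpa [IntegrableOn] using (integrableOn_pow_mul_exp_neg_mul hδ 0).const_mul C
    exact Integrable.mono' hdom hfm.aestronglyMeasurable
      ((ae_restrict_iff' measurableSet_Ioi).2 (Eventually.of_forall fun u hu => hfb u hu))
  have hfc : ∀ᵐ u ∂(volume.restrict (Set.Ioi (0:ℝ))), ContinuousAt f u := by
    refine ae_restrict_of_ae ?_
    have hcount : (Set.range fun n : ℕ => Real.log n).Countable := Set.countable_range _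
    filter_upwards [hcount.ae_notMem volume] with u hu
    refine ContinuousAt.div (ContinuousAt.comp (continuousAt_Deltak k (Real.exp_pos u) ?_)
      Real.continuous_exp.continuousAt) Real.continuous_exp.continuousAt (Real.exp_pos u).ne'
    intro n hn
    exact hu ⟨n, by simp only [hn, Real.log_exp]⟩
  obtain ⟨h1, h2, h3⟩ := hankel_plancherel hfm hfM hfi hfc
  have hphi : ∀ x ∈ Set.Ioi (0:ℝ),
      (∫ u in Set.Ioi 0, f u * besselSeries (x * u)) ^ 2 = phik k x ^ 2 := by
    intro x hx
    have hx : 0 < x := hx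
    rw [phik, integral_Ioi_one_eq_integral_exp]
    congr 1
    refine setIntegral_congr_fun measurableSet_Ioi fun u hu => ?_
    have hu : 0 < u := hu
    simp only [hf, Real.log_exp]
    rw [besselJ0_two_mul_sqrt (by positivity)]
    have := Real.exp_pos u
    field_simp
  have hdel : ∀ u, Real.exp u * (Deltak k (Real.exp u) ^ 2 / Real.exp u ^ 3) = f u ^ 2 := by
    intro u
    simp only [hf]
    have := Real.exp_pos u
    field_simp
  refine ⟨h1.congr_fun hphi measurableSet_Ioi, ?_, ?_⟩
  · rw [integrableOn_Ioi_one_iff_exp]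
    simp only [hdel]
    exact h2
  · rw [integral_Ioi_one_eq_integral_exp]
    simp only [hdel]
    rw [← h3]
    exact (setIntegral_congr_fun measurableSet_Ioi hphi).symm
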